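/- arXiv:1907.00272 — 2 statements merged into one kernel-verified Lean document; each statement's English description precedes it below -/
import Mathlib

section
/- Let 𝒢 be a class of finite simple graphs closed under taking induced subgraphs, and suppose that every connected graph in 𝒢 whose block-cutpoint tree is a path has a Hamiltonian path. Then for every ℓ ≥ 2, every connected graph G in 𝒢 whose block-cutpoint tree has exactly ℓ leaves has a spanning tree with exactly ℓ leaves. -/
/-!
The leaves of the block-cutpoint tree are the blocks `B` with exactly one cut-vertex `c`. They are
handled through the sets `B \ {c}`, called *ends*: an end is a component of `G - c`, for a
cut-vertex `c`, that contains no cut-vertex of `G` (`BCLeaves.IsEnd`, `BCLeaves.ncard_leaves_eq`).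
Cut-vertices, branches (components of `G - c`) and ends are defined relative to a vertex set `S`,
so that they can be compared for different induced subgraphs of one graph.

Lower bound: every spanning tree has a leaf in each end, because a path of the tree that enters the
end from its cut-vertex can be prolonged to a leaf without leaving the end
(`BCLeaves.ncard_ends_le_ncard_leaves`).

Upper bound (`BCLeaves.exists_hasTree`), by induction on the number `n` of ends of `G[S]`. If
`n ≤ 2`, the block-cutpoint tree has at most two leaves, so it is a path, and a Hamiltonian path of
`G[S]` is the required tree. If `n ≥ 3`, take a branch `C` at a cut-vertex `c`, maximal among the
branches with exactly one end. By maximality, removing `C` creates no new end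
(`BCLeaves.IsEnd.of_diff`), so `G[S \ C]` has fewer ends and, by induction, a spanning tree with at
most `n - 1` leaves. To extend it over `C`, choose a neighbour `d` of `c` outside `C`. The graph
`G[C ∪ {c, d}]` has at most two ends (`BCLeaves.IsEnd.of_pendant`), hence a Hamiltonian path. As
`c` is the only neighbour of `d` there, the path starts with `d, c`, and its remainder is a path
from `c` covering `C`. Attaching it to the tree at `c` adds at most one leaf
(`BCLeaves.HasTree.attach_path`).

That the block-cutpoint graph is a tree is proved here as well: two blocks through `c` that meet
a common component of `G - c` coincide (`IsBlock.eq_of_joined`), so each of its edges is a bridge.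
-/

open SimpleGraph

/-- A set `S` of nodes of a host graph `H` induces a path in `H`:
there is an enumeration of `S` such that two nodes of `S` are adjacent
in `H` iff they are consecutive in the enumeration. -/
def InducesPath {β : Type*} (H : SimpleGraph β) (S : Set β) : Prop :=
  ∃ (n : ℕ) (f : Fin (n + 1) → β), Function.Injective f ∧ Set.range f = S ∧
    ∀ i j : Fin (n + 1), H.Adj (f i) (f j) ↔ (i.val + 1 = j.val ∨ j.val + 1 = i.val)

/-- Two node sets are non-crossing in a host graph `H`: each set difference
induces a connected (possibly empty) subgraph of `H`. -/
def NonCrossing {β : Type*} (H : SimpleGraph β) (S S' : Set β) : Prop :=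
  (H.induce (S \ S')).Preconnected ∧ (H.induce (S' \ S)).Preconnected

/-- The claw `K_{1,3}`: vertex `0` adjacent to `1`, `2`, `3`, which are pairwise nonadjacent. -/
def claw : SimpleGraph (Fin 4) := SimpleGraph.fromRel (fun a b => a = 0 ∨ b = 0)

/-- A graph is claw-free when it has no induced subgraph isomorphic to `K_{1,3}`. -/
def ClawFree {V : Type*} (G : SimpleGraph V) : Prop := ¬ Nonempty (claw ↪g G)

/-- A graph is chordal when it has no induced cycle of length at least four. -/
def Chordal {V : Type*} (G : SimpleGraph V) : Prop :=
  ∀ n : ℕ, 4 ≤ n → ¬ Nonempty (cycleGraph n ↪g G)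

/-- The 3-sun: triangle `0,1,2` and pairwise nonadjacent vertices `3,4,5` with
`3 ~ 0,1`; `4 ~ 1,2`; `5 ~ 2,0`. -/
def threeSun : SimpleGraph (Fin 6) := SimpleGraph.fromRel (fun a b =>
  (a = 0 ∧ b = 1) ∨ (a = 0 ∧ b = 2) ∨ (a = 1 ∧ b = 2) ∨
  (a = 3 ∧ b = 0) ∨ (a = 3 ∧ b = 1) ∨
  (a = 4 ∧ b = 1) ∨ (a = 4 ∧ b = 2) ∨
  (a = 5 ∧ b = 2) ∨ (a = 5 ∧ b = 0))

/-- The net: triangle `0,1,2` with pendant vertices `3 ~ 0`, `4 ~ 1`, `5 ~ 2`. -/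
def net : SimpleGraph (Fin 6) := SimpleGraph.fromRel (fun a b =>
  (a = 0 ∧ b = 1) ∨ (a = 0 ∧ b = 2) ∨ (a = 1 ∧ b = 2) ∨
  (a = 3 ∧ b = 0) ∨ (a = 4 ∧ b = 1) ∨ (a = 5 ∧ b = 2))

/-- `s` is a maximal clique of `G`. -/
def IsMaxClique {V : Type*} (G : SimpleGraph V) (s : Set V) : Prop :=
  G.IsClique s ∧ ∀ t : Set V, G.IsClique t → s ⊆ t → s = t

/-- `x` is an endpoint of the set `S` (inducing a path in `T`): `x ∈ S` and
`x` has at most one neighbour inside `S`. -/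
def IsPathEnd {β : Type*} (T : SimpleGraph β) (S : Set β) (x : β) : Prop :=
  x ∈ S ∧ {y ∈ S | T.Adj x y}.Subsingleton

/-- `x` is a terminal of the model `P` in `T`: it is an endpoint of every path containing it. -/
def IsTerminal {V β : Type*} (T : SimpleGraph β) (P : V → Set β) (x : β) : Prop :=
  ∀ v : V, x ∈ P v → IsPathEnd T (P v) x

/-- `x` is a junction of the model `P` in `T`: it is an internal (non-endpoint) node of
every path containing it. -/
def IsJunction {V β : Type*} (T : SimpleGraph β) (P : V → Set β) (x : β) : Prop :=
  ∀ v : V, x ∈ P v → ¬ IsPathEnd T (P v) x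

/-- `x` is mixed: neither a terminal nor a junction. -/
def IsMixed {V β : Type*} (T : SimpleGraph β) (P : V → Set β) (x : β) : Prop :=
  ¬ IsTerminal T P x ∧ ¬ IsJunction T P x

/-- In the tree `T` rooted at `r`, `a` is an ancestor of `b`:
`a` lies on the unique path from `b` to `r`. -/
def Ancestor {β : Type*} (T : SimpleGraph β) (r a b : β) : Prop :=
  ∀ w : T.Walk b r, w.IsPath → a ∈ w.support

/-- `S` is a dominating set of `G`. -/
def IsDom {V : Type*} (G : SimpleGraph V) (S : Set V) : Prop :=
  ∀ v : V, v ∈ S ∨ ∃ u ∈ S, G.Adj u v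

/-- `S` is a connected dominating set of `G` (nonempty with connected induced subgraph). -/
def IsConnDom {V : Type*} (G : SimpleGraph V) (S : Set V) : Prop :=
  IsDom G S ∧ (G.induce S).Connected

/-- Two vertices are twins when they have the same closed neighbourhood. -/
def Twins {V : Type*} (G : SimpleGraph V) (u v : V) : Prop :=
  insert u (G.neighborSet u) = insert v (G.neighborSet v)

/-- A path `z 0, …, z (k-1)` in `T` (with `k ≥ 3` nodes) whose two end nodes are terminals
and whose inner nodes all have degree two in `T`. -/
def TerminalPath {V β : Type*} (T : SimpleGraph β) (P : V → Set β) (k : ℕ) (z : ℕ → β) : Prop :=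
  3 ≤ k ∧ (∀ i j, i < k → j < k → z i = z j → i = j) ∧
  (∀ i, i + 1 < k → T.Adj (z i) (z (i + 1))) ∧
  IsTerminal T P (z 0) ∧ IsTerminal T P (z (k - 1)) ∧
  ∀ i, 0 < i → i + 1 < k → (T.neighborSet (z i)).ncard = 2

/-- Edge part of type (1): the three edges incident to a junction `x`,
whose three neighbours are all terminals. -/
def StarPart {V β : Type*} (T : SimpleGraph β) (P : V → Set β) (p : Set (Sym2 β)) : Prop :=
  ∃ x : β, IsJunction T P x ∧ (T.neighborSet x).ncard = 3 ∧
    (∀ y ∈ T.neighborSet x, IsTerminal T P y) ∧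
    p = {e | e ∈ T.edgeSet ∧ x ∈ e}

/-- Edge part of type (2): the edges of a path `z 0, …, z k` in `T` whose two end nodes
are terminals and each of whose internal nodes has degree two in `T` and is mixed. -/
def PathPart {V β : Type*} (T : SimpleGraph β) (P : V → Set β) (p : Set (Sym2 β)) : Prop :=
  ∃ (k : ℕ) (z : ℕ → β), 1 ≤ k ∧
    (∀ i j, i ≤ k → j ≤ k → z i = z j → i = j) ∧
    (∀ i, i < k → T.Adj (z i) (z (i + 1))) ∧
    IsTerminal T P (z 0) ∧ IsTerminal T P (z k) ∧
    (∀ i, 0 < i → i < k → (T.neighborSet (z i)).ncard = 2 ∧ IsMixed T P (z i)) ∧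
    p = {e | ∃ i, i < k ∧ e = s(z i, z (i + 1))}

/-- `v` is a cut-vertex of `G`: deleting `v` leaves a disconnected graph. -/
def IsCutVertex {V : Type*} (G : SimpleGraph V) (v : V) : Prop :=
  ¬ (G.induce {u | u ≠ v}).Preconnected

/-- `B` is (the vertex set of) a block of `G`: a maximal connected subgraph
having no cut-vertex of its own. -/
def IsBlock {V : Type*} (G : SimpleGraph V) (B : Set V) : Prop :=
  (G.induce B).Connected ∧ (∀ v ∈ B, (G.induce (B \ {v})).Preconnected) ∧
  ∀ B' : Set V, B ⊆ B' → (G.induce B').Connected →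
    (∀ v ∈ B', (G.induce (B' \ {v})).Preconnected) → B = B'

/-- The node type of the block-cutpoint tree: cut-vertices and blocks of `G`. -/
def BCVert {V : Type*} (G : SimpleGraph V) : Type _ :=
  {v : V // IsCutVertex G v} ⊕ {B : Set V // IsBlock G B}

/-- The block-cutpoint tree of `G`: a cut-vertex `c` is joined to a block `B`
exactly when `c ∈ B`. -/
def bcGraph {V : Type*} (G : SimpleGraph V) : SimpleGraph (BCVert G) :=
  SimpleGraph.fromRel (fun a b =>
    ∃ (c : {v : V // IsCutVertex G v}) (B : {B : Set V // IsBlock G B}),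
      a = Sum.inl c ∧ b = Sum.inr B ∧ (c : V) ∈ (B : Set V))

universe u

namespace BCLeaves

/-! ### Connectivity inside vertex sets -/

section Relative

variable {V : Type*} {G : SimpleGraph V}

/-- `u` and `v` are joined by a walk of `G` all of whose vertices lie in `A`. -/
def JoinedIn (G : SimpleGraph V) (A : Set V) (u v : V) : Prop :=
  ∃ p : G.Walk u v, ∀ x ∈ p.support, x ∈ A

/-- `A` induces a preconnected subgraph of `G`, phrased with walks of `G`. -/
def ConnIn (G : SimpleGraph V) (A : Set V) : Prop :=
  ∀ u ∈ A, ∀ v ∈ A, JoinedIn G A u v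

theorem JoinedIn.refl {A : Set V} {u : V} (h : u ∈ A) : JoinedIn G A u u :=
  ⟨.nil, by simpa using h⟩

theorem JoinedIn.symm {A : Set V} {u v : V} (h : JoinedIn G A u v) : JoinedIn G A v u := by
  obtain ⟨p, hp⟩ := h
  exact ⟨p.reverse, by simpa using hp⟩

theorem JoinedIn.trans {A : Set V} {u v w : V} (h : JoinedIn G A u v) (h' : JoinedIn G A v w) :
    JoinedIn G A u w := by
  obtain ⟨p, hp⟩ := h
  obtain ⟨q, hq⟩ := h'
  exact ⟨p.append q, fun x hx => (Walk.mem_support_append_iff p q).1 hx |>.elim (hp x) (hq x)⟩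

theorem JoinedIn.mono {A B : Set V} {u v : V} (h : JoinedIn G A u v) (hAB : A ⊆ B) :
    JoinedIn G B u v := by
  obtain ⟨p, hp⟩ := h
  exact ⟨p, fun x hx => hAB (hp x hx)⟩

theorem JoinedIn.of_adj {A : Set V} {u v : V} (hu : u ∈ A) (hv : v ∈ A) (h : G.Adj u v) :
    JoinedIn G A u v :=
  ⟨.cons h .nil, by simp [hu, hv]⟩

theorem JoinedIn.left_mem {A : Set V} {u v : V} (h : JoinedIn G A u v) : u ∈ A := by
  obtain ⟨p, hp⟩ := h
  exact hp _ p.start_mem_support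

theorem JoinedIn.right_mem {A : Set V} {u v : V} (h : JoinedIn G A u v) : v ∈ A :=
  h.symm.left_mem

/-- Starting in `X`, a walk inside `S` that can leave `X` only through `c` either stays in `X`
or joins its start to `c` inside `X ∪ {c}`. -/
theorem JoinedIn.stay_or_hit {S X : Set V} {c u v : V} (h : JoinedIn G S u v) (hu : u ∈ X)
    (hX : ∀ x ∈ X, ∀ y ∈ S, y ≠ c → G.Adj x y → y ∈ X) :
    JoinedIn G X u v ∨ JoinedIn G (insert c X) u c := by
  obtain ⟨p, hp⟩ := h
  induction p with
  | nil => exact .inl (.refl hu)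
  | @cons a b d hab q ih =>
    by_cases hb : b = c
    · subst hb
      exact .inr (.of_adj (by simp [hu]) (by simp) hab)
    · have hbX := hX a hu b (hp _ (by simp)) hb hab
      rcases ih hbX (fun x hx => hp x (by simp [hx])) with h | h
      · exact .inl ((JoinedIn.of_adj hu hbX hab).trans h)
      · exact .inr ((JoinedIn.of_adj (by simp [hu]) (by simp [hbX]) hab).trans h)

theorem JoinedIn.mem_of_closed {S X : Set V} {u v : V} (h : JoinedIn G S u v) (hu : u ∈ X)
    (hX : ∀ x ∈ X, ∀ y ∈ S, G.Adj x y → y ∈ X) : v ∈ X := by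
  obtain ⟨p, hp⟩ := h
  induction p with
  | nil => exact hu
  | cons hab q ih =>
    exact ih (hX _ hu _ (hp _ (by simp)) hab) (fun x hx => hp x (by simp [hx]))

theorem connIn_iff {A : Set V} : ConnIn G A ↔ (G.induce A).Preconnected := by
  constructor
  · rintro h ⟨u, hu⟩ ⟨v, hv⟩
    obtain ⟨p, hp⟩ := h u hu v hv
    exact ⟨p.induce A hp⟩
  · intro h u hu v hv
    obtain ⟨p⟩ := h ⟨u, hu⟩ ⟨v, hv⟩
    have key : ∀ x ∈ (p.map (Embedding.induce A).toHom).support, x ∈ A := by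
      intro x hx
      rw [Walk.support_map, List.mem_map] at hx
      obtain ⟨y, -, rfl⟩ := hx
      exact y.2
    exact ⟨p.map (Embedding.induce A).toHom, key⟩

/-- It suffices to join everything to one hub vertex. -/
theorem ConnIn.of_hub {A : Set V} (c : V) (h : ∀ u ∈ A, JoinedIn G A u c) : ConnIn G A :=
  fun u hu v hv => (h u hu).trans (h v hv).symm

theorem ConnIn.union {A B : Set V} (hA : ConnIn G A) (hB : ConnIn G B) {x : V} (hxA : x ∈ A)
    (hxB : x ∈ B) : ConnIn G (A ∪ B) := by
  apply ConnIn.of_hub x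
  rintro u (hu | hu)
  · exact (hA u hu x hxA).mono Set.subset_union_left
  · exact (hB u hu x hxB).mono Set.subset_union_right

/-! ### Separations, branches and ends -/

/-- `D` is a nonempty union of components of `G[S] - c`, and not all of them. -/
structure Sep (G : SimpleGraph V) (S : Set V) (c : V) (D : Set V) : Prop where
  sub : D ⊆ S
  notMem : c ∉ D
  nonempty : D.Nonempty
  rest : ∃ y ∈ S, y ≠ c ∧ y ∉ D
  closed : ∀ u ∈ D, ∀ w ∈ S, w ≠ c → G.Adj u w → w ∈ D

/-- `c` is a cut-vertex of `G[S]`. -/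
def Cut (G : SimpleGraph V) (S : Set V) (c : V) : Prop :=
  c ∈ S ∧ ∃ D, Sep G S c D

/-- `D` is a component of `G[S] - c`, for a cut-vertex `c` of `G[S]`. -/
structure Branch (G : SimpleGraph V) (S : Set V) (c : V) (D : Set V) : Prop where
  mem : c ∈ S
  sep : Sep G S c D
  conn : ConnIn G D

/-- `E` is an end of `G[S]`: a branch without cut-vertices. The ends are the sets `B \ {c}` where
`B` is a leaf block and `c` its only cut-vertex. -/
def IsEnd (G : SimpleGraph V) (S : Set V) (E : Set V) : Prop :=
  (∃ c, Branch G S c E) ∧ ∀ x ∈ E, ¬ Cut G S x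

theorem Branch.cut {S D : Set V} {c : V} (h : Branch G S c D) : Cut G S c := ⟨h.mem, D, h.sep⟩

theorem Sep.compl {S D : Set V} {c : V} (h : Sep G S c D) : Sep G S c ((S \ D) \ {c}) where
  sub := fun x hx => hx.1.1
  notMem := by simp
  nonempty := by
    obtain ⟨y, hy, hyc, hyD⟩ := h.rest
    exact ⟨y, ⟨hy, hyD⟩, hyc⟩
  rest := by
    obtain ⟨y, hy⟩ := h.nonempty
    exact ⟨y, h.sub hy, fun e => h.notMem (e ▸ hy), fun h' => h'.1.2 hy⟩
  closed := by
    rintro u ⟨⟨hu, huD⟩, huc⟩ w hw hwc huw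
    exact ⟨⟨hw, fun hwD => huD (h.closed w hwD u hu huc huw.symm)⟩, hwc⟩

/-- The side of a separation can be chosen away from a prescribed vertex. -/
theorem Cut.exists_sep_notMem {S : Set V} {c y : V} (h : Cut G S c) :
    ∃ D, Sep G S c D ∧ y ∉ D := by
  obtain ⟨-, D, hD⟩ := h
  by_cases hy : y ∈ D
  · exact ⟨_, hD.compl, fun h' => h'.1.2 hy⟩
  · exact ⟨D, hD, hy⟩

/-- A connected set avoiding `c` lies on one side of any separation at `c`. -/
theorem Sep.subset_of_conn {S D A : Set V} {c a : V} (h : Sep G S c D) (hA : ConnIn G A)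
    (hAS : A ⊆ S) (hc : c ∉ A) (haA : a ∈ A) (haD : a ∈ D) : A ⊆ D := fun x hx =>
  (hA a haA x hx).mem_of_closed haD fun u hu w hw huw =>
    h.closed u hu w (hAS hw) (fun e => hc (e ▸ hw)) huw

theorem Sep.joined_cut {S D : Set V} {c : V} (hS : ConnIn G S) (hc : c ∈ S) (h : Sep G S c D)
    {u : V} (hu : u ∈ D) : JoinedIn G (insert c D) u c := by
  rcases (hS u (h.sub hu) c hc).stay_or_hit hu h.closed with h' | h'
  · exact absurd h'.right_mem h.notMem
  · exact h'

theorem Sep.conn_insert {S D : Set V} {c : V} (hS : ConnIn G S) (hc : c ∈ S) (h : Sep G S c D) :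
    ConnIn G (insert c D) := by
  apply ConnIn.of_hub c
  rintro u (rfl | hu)
  · exact .refl (by simp)
  · exact h.joined_cut hS hc hu

theorem Sep.conn_diff {S D : Set V} {c : V} (hS : ConnIn G S) (hc : c ∈ S) (h : Sep G S c D) :
    ConnIn G (S \ D) := by
  have := h.compl.conn_insert hS hc
  rwa [Set.insert_sdiff_singleton, Set.insert_eq_of_mem] at this
  exact ⟨hc, h.notMem⟩

/-- In a connected set with at least two vertices, every vertex has a neighbour in the set. -/
theorem ConnIn.exists_adj {A : Set V} (hA : ConnIn G A) {c y : V} (hc : c ∈ A) (hy : y ∈ A)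
    (hyc : y ≠ c) : ∃ d ∈ A, d ≠ c ∧ G.Adj c d := by
  obtain ⟨p, hp⟩ := hA c hc y hy
  cases p with
  | nil => exact absurd rfl hyc
  | cons h q => exact ⟨_, hp _ (by simp), h.ne', h⟩

theorem Sep.exists_adj {S D : Set V} {c : V} (hS : ConnIn G S) (hc : c ∈ S) (h : Sep G S c D) :
    ∃ d ∈ D, G.Adj c d := by
  obtain ⟨y, hy⟩ := h.nonempty
  obtain ⟨d, hd, hdc, hcd⟩ := (h.conn_insert hS hc).exists_adj (Set.mem_insert _ _)
    (Set.mem_insert_of_mem _ hy) (fun e => h.notMem (e ▸ hy))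
  exact ⟨d, hd.resolve_left hdc, hcd⟩

/-- Two ends sharing a vertex are equal: the cut-vertex of one is not in the other. -/
theorem IsEnd.eq_of_mem {S E F : Set V} (hE : IsEnd G S E) (hF : IsEnd G S F) {x : V}
    (hxE : x ∈ E) (hxF : x ∈ F) : E = F := by
  obtain ⟨⟨c, hc⟩, hE'⟩ := hE
  obtain ⟨⟨d, hd⟩, hF'⟩ := hF
  apply subset_antisymm
  · exact hd.sep.subset_of_conn hc.conn hc.sep.sub (fun h => hE' d h hd.cut) hxE hxF
  · exact hc.sep.subset_of_conn hd.conn hd.sep.sub (fun h => hF' c h hc.cut) hxF hxE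

theorem IsEnd.nonempty {S E : Set V} (hE : IsEnd G S E) : E.Nonempty := by
  obtain ⟨⟨c, hc⟩, -⟩ := hE
  exact hc.sep.nonempty

/-! ### Splitting off a branch -/

/-- Removing a branch at `c` destroys no cut-vertex other than `c`. -/
theorem Branch.cut_diff {S C : Set V} {c x : V} (hS : ConnIn G S) (h : Branch G S c C)
    (hx : Cut G S x) (hxC : x ∉ C) (hxc : x ≠ c) : Cut G (S \ C) x := by
  obtain ⟨D, hD, hcD⟩ := hx.exists_sep_notMem (y := c)
  have hDC : ∀ y ∈ D, y ∉ C := fun y hy hyC =>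
    hcD (hD.subset_of_conn (h.sep.conn_insert hS h.mem)
      (Set.insert_subset h.mem h.sep.sub) (by simp [hxC, hxc]) (a := y) (by simp [hyC]) hy
      (Set.mem_insert _ _))
  refine ⟨⟨hx.1, hxC⟩, D, ?_, hD.notMem, hD.nonempty, ?_, ?_⟩
  · exact fun y hy => ⟨hD.sub hy, hDC y hy⟩
  · exact ⟨c, ⟨h.mem, h.sep.notMem⟩, hxc.symm, hcD⟩
  · exact fun u hu w hw => hD.closed u hu w hw.1

/-- Suppose the branch `C` at `c` contains exactly one end and no larger branch does. Then every
end of `G[S \ C]` is an end of `G[S]`. An end of `G[S \ C]` through `c` would enlarge `C` to a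
branch which still has only one end. -/
theorem IsEnd.of_diff {S C E F : Set V} {c : V} (hS : ConnIn G S) (h : Branch G S c C)
    (hEC : E ⊆ C) (huniq : ∀ D, IsEnd G S D → D ⊆ C → D = E)
    (hmax : ∀ c' C', Branch G S c' C' → C ⊆ C' → E ⊆ C' →
      (∀ D, IsEnd G S D → D ⊆ C' → D = E) → C' ⊆ C)
    (hF : IsEnd G (S \ C) F) : IsEnd G S F := by
  obtain ⟨⟨v, hv⟩, hFcut⟩ := hF
  have hvC : v ∉ C := hv.mem.2
  by_cases hcF : c ∈ F
  · exfalso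
    have hvc : v ≠ c := fun e => hv.sep.notMem (e ▸ hcF)
    have hB : Branch G S v (F ∪ C) := by
      refine ⟨hv.mem.1, ⟨?_, ?_, ?_, ?_, ?_⟩, ?_⟩
      · exact Set.union_subset (fun x hx => (hv.sep.sub hx).1) h.sep.sub
      · simp [hvC, hv.sep.notMem]
      · exact ⟨c, .inl hcF⟩
      · obtain ⟨y, hy, hyv, hyF⟩ := hv.sep.rest
        exact ⟨y, hy.1, hyv, by simp [hyF, hy.2]⟩
      · rintro u (hu | hu) w hw hwv huw
        · by_cases hwC : w ∈ C
          · exact .inr hwC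
          · exact .inl (hv.sep.closed u hu w ⟨hw, hwC⟩ hwv huw)
        · by_cases hwc : w = c
          · exact .inl (hwc ▸ hcF)
          · exact .inr (h.sep.closed u hu w hw hwc huw)
      · have := hv.conn.union (h.sep.conn_insert hS h.mem) hcF (Set.mem_insert _ _)
        rwa [Set.union_insert, Set.insert_eq_of_mem (.inl hcF)] at this
    have := hmax v (F ∪ C) hB Set.subset_union_right
      (hEC.trans Set.subset_union_right) ?_ (.inl hcF)
    · exact h.sep.notMem this
    intro D hD hDsub
    refine huniq D hD ?_
    have hcD : c ∉ D := fun hcD => hD.2 c hcD h.cut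
    obtain ⟨⟨d, hd⟩, hDcut⟩ := hD
    by_contra hDC
    have hdisj : ∀ y ∈ D, y ∉ C := fun y hy hyC =>
      hDC (h.sep.subset_of_conn hd.conn hd.sep.sub hcD hy hyC)
    have hDF : D ⊆ F := fun y hy => (hDsub hy).resolve_right (hdisj y hy)
    obtain ⟨e, heD, hde⟩ := hd.sep.exists_adj hS hd.mem
    by_cases hdC : d ∈ C
    · have := h.sep.closed d hdC e (hd.sep.sub heD) (fun e' => hcD (e' ▸ heD)) hde
      exact hdisj e heD this
    by_cases hdv : d = v
    · subst hdv
      exact hcD (hd.sep.subset_of_conn hB.conn hB.sep.sub hB.sep.notMem (hDsub heD) heD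
        (.inl hcF))
    have hdF : d ∈ F := hv.sep.closed e (hDF heD) d ⟨hd.mem, hdC⟩ hdv hde.symm
    refine hFcut d hdF ?_
    by_cases hdc : d = c
    · subst hdc
      refine ⟨⟨hd.mem, hdC⟩, D, ?_, hcD, ⟨e, heD⟩, ?_, ?_⟩
      · exact fun y hy => ⟨hd.sep.sub hy, hdisj y hy⟩
      · exact ⟨v, hv.mem, hvc, fun hvD => hv.sep.notMem (hDF hvD)⟩
      · exact fun u hu w hw => hd.sep.closed u hu w hw.1
    · exact h.cut_diff hS hd.cut hdC hdc
  · refine ⟨⟨v, hv.mem.1, ⟨?_, hv.sep.notMem, hv.sep.nonempty, ?_, ?_⟩, hv.conn⟩, ?_⟩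
    · exact fun x hx => (hv.sep.sub hx).1
    · obtain ⟨y, hy, hyv, hyF⟩ := hv.sep.rest
      exact ⟨y, hy.1, hyv, hyF⟩
    · intro u hu w hw hwv huw
      by_cases hwC : w ∈ C
      · exact absurd (h.sep.closed w hwC u (hv.sep.sub hu).1 (fun e => hcF (e ▸ hu)) huw.symm)
          (hv.sep.sub hu).2
      · exact hv.sep.closed u hu w ⟨hw, hwC⟩ hwv huw
    · intro x hx hcut
      exact hFcut x hx (h.cut_diff hS hcut (hv.sep.sub hx).2 (fun e => hcF (e ▸ hx)))

/-- For a branch `C` at `c` and a neighbour `d` of `c` outside `C`, the graph `G[C ∪ {c, d}]` has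
no ends but `{d}` and the ends of `G[S]` inside `C`. -/
theorem IsEnd.of_pendant {S C F : Set V} {c d : V} (hS : ConnIn G S) (h : Branch G S c C)
    (hdS : d ∈ S) (hdC : d ∉ C) (hdc : d ≠ c) (hcd : G.Adj c d)
    (hF : IsEnd G (insert d (insert c C)) F) : F = {d} ∨ (IsEnd G S F ∧ F ⊆ C) := by
  obtain ⟨⟨v, hv⟩, hFcut⟩ := hF
  have hsub : insert d (insert c C) ⊆ S :=
    Set.insert_subset hdS (Set.insert_subset h.mem h.sep.sub)
  have hsepd : Sep G (insert d (insert c C)) c {d} := by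
    refine ⟨by simp, by simpa using hdc.symm, by simp, ?_, ?_⟩
    · obtain ⟨y, hy⟩ := h.sep.nonempty
      exact ⟨y, by simp [hy], fun e => h.sep.notMem (e ▸ hy), fun e => hdC (e ▸ hy)⟩
    · rintro u rfl w hw hwc huw
      rcases hw with rfl | rfl | hw
      · simp
      · exact absurd rfl hwc
      · exact absurd (h.sep.closed w hw u hdS hdc huw.symm) hdC
  have hcF : c ∉ F := fun hc => hFcut c hc ⟨by simp, _, hsepd⟩
  by_cases hdF : d ∈ F
  · left
    refine subset_antisymm ?_ (by simpa using hdF)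
    exact hsepd.subset_of_conn hv.conn hv.sep.sub hcF hdF rfl
  right
  have hFC : F ⊆ C := by
    intro x hx
    rcases hv.sep.sub hx with rfl | rfl | hx'
    · exact absurd hx hdF
    · exact absurd hx hcF
    · exact hx'
  have hconn' : ConnIn G (insert d (insert c C)) := by
    apply ConnIn.of_hub c
    intro u hu
    rcases hu with rfl | hu
    · exact .of_adj (by simp) (by simp) hcd.symm
    · exact (h.sep.conn_insert hS h.mem u hu c (by simp)).mono (Set.subset_insert _ _)
  have hvd : v ≠ d := by
    rintro rfl
    obtain ⟨e, he, hve⟩ := hv.sep.exists_adj hconn' hv.mem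
    exact hdC (h.sep.closed e (hFC he) v hdS hdc hve.symm)
  refine ⟨⟨⟨v, hsub hv.mem, ⟨hFC.trans h.sep.sub, hv.sep.notMem, hv.sep.nonempty,
    ⟨d, hdS, hvd.symm, hdF⟩, ?_⟩, hv.conn⟩, ?_⟩, hFC⟩
  · intro u hu w hw hwv huw
    refine hv.sep.closed u hu w ?_ hwv huw
    by_cases hwc : w = c
    · simp [hwc]
    · simp [h.sep.closed u (hFC hu) w hw hwc huw]
  · intro x hx hcut
    have hxC := hFC hx
    refine hFcut x hx ⟨by simp [hxC], ?_⟩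
    obtain ⟨D, hD, hcD⟩ := hcut.exists_sep_notMem (y := c)
    have hDC : D ⊆ C := by
      intro y hy
      by_contra hyC
      exact hcD (hD.subset_of_conn (h.sep.conn_diff hS h.mem) Set.sdiff_subset
        (fun h' => h'.2 hxC) ⟨hD.sub hy, hyC⟩ hy ⟨h.mem, h.sep.notMem⟩)
    refine ⟨D, fun y hy => by simp [hDC hy], hD.notMem, hD.nonempty, ?_, ?_⟩
    · exact ⟨c, by simp, fun e => h.sep.notMem (e ▸ hxC), hcD⟩
    · exact fun u hu w hw => hD.closed u hu w (hsub hw)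

end Relative

/-! ### Leaves of finite trees -/

section Trees

/-- In a finite acyclic graph a nontrivial path can be prolonged until its last vertex is
a leaf. -/
theorem exists_append_leaf {V : Type*} [Finite V] {H : SimpleGraph V} (hH : H.IsAcyclic)
    {a v : V} (p : H.Walk a v) (hp : p.IsPath) (hav : a ≠ v) :
    ∃ (b : V) (q : H.Walk v b), (p.append q).IsPath ∧ (H.neighborSet b).ncard = 1 := by
  have := Fintype.ofFinite V
  -- Choose the prolongation of maximal length.
  let P : ℕ → Prop := fun n => ∃ (b : V) (q : H.Walk v b), (p.append q).IsPath ∧ q.length = n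
  have hP0 : P 0 := ⟨v, .nil, by simpa using hp, rfl⟩
  have hPb : ∀ n, P n → n ≤ Fintype.card V := by
    rintro n ⟨b, q, hq, rfl⟩
    exact hq.of_append_right.length_lt.le
  classical
  have hs := Nat.findGreatest_spec (P := P) (Nat.zero_le (Fintype.card V)) hP0
  obtain ⟨b, q, hq, hlen⟩ := hs
  refine ⟨b, q, hq, ?_⟩
  have hnil : ¬ (p.append q).Nil := by
    intro h
    have hl := Walk.length_eq_zero_iff.2 h
    rw [Walk.length_append] at hl
    exact hav (Walk.eq_of_length_eq_zero (p := p) (by omega))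
  rw [Set.ncard_eq_one]
  refine ⟨(p.append q).penultimate, ?_⟩
  ext w
  simp only [mem_neighborSet, Set.mem_singleton_iff]
  constructor
  · intro hbw
    refine hH.eq_penultimate_of_adj_end hq hbw ?_
    by_contra hw
    have hlong : P (q.length + 1) := by
      refine ⟨w, q.concat hbw, ?_, by simp⟩
      rw [Walk.append_concat]
      exact hq.concat hw hbw
    have := Nat.le_findGreatest (hPb _ hlong) hlong
    omega
  · rintro rfl
    exact ((p.append q).adj_penultimate hnil).symm

/-- A finite tree with at most two leaves is a path. -/
theorem inducesPath_of_leaves_le_two {β : Type*} [Finite β] {H : SimpleGraph β}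
    (hH : H.IsTree) (hle : {x : β | (H.neighborSet x).ncard = 1}.ncard ≤ 2) :
    InducesPath H (Set.univ : Set β) := by
  classical
  have hac := hH.isAcyclic
  suffices h : ∃ (a b : β) (p : H.Walk a b), p.IsPath ∧ ∀ v, v ∈ p.support by
    obtain ⟨a, b, p, hp, hall⟩ := h
    have hinj : Function.Injective fun i : Fin (p.length + 1) => p.getVert i.val := by
      intro i j hij
      exact Fin.ext (hp.getVert_injOn (by simpa using Nat.lt_succ_iff.1 i.2)
        (by simpa using Nat.lt_succ_iff.1 j.2) hij)
    refine ⟨p.length, fun i => p.getVert i.val, hinj, ?_, ?_⟩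
    · refine Set.eq_univ_of_forall fun v => ?_
      obtain ⟨n, hn, hnl⟩ := Walk.mem_support_iff_exists_getVert.1 (hall v)
      exact ⟨⟨n, by omega⟩, hn⟩
    · -- A neighbour of a path vertex earlier on the path is its predecessor.
      have key : ∀ i j : ℕ, i < j → j ≤ p.length → H.Adj (p.getVert i) (p.getVert j) →
          i + 1 = j := by
        intro i j hij hj hadj
        have hpen := hac.eq_penultimate_of_adj_end (hp.take j) (w := p.getVert i) hadj.symm (by
          rw [Walk.mem_support_iff_exists_getVert]
          exact ⟨i, by rw [Walk.take_getVert]; congr 1; omega, by simp; omega⟩)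
        rw [Walk.penultimate, Walk.take_getVert] at hpen
        have := hp.getVert_injOn (by simp; omega) (by simp) hpen
        simp at this
        omega
      intro i j
      change H.Adj (p.getVert i.val) (p.getVert j.val) ↔ _
      constructor
      · intro hadj
        rcases lt_trichotomy i.val j.val with h | h | h
        · exact .inl (key _ _ h (by omega) hadj)
        · rw [h] at hadj
          exact absurd rfl hadj.ne
        · exact .inr (key _ _ h (by omega) hadj.symm)
      · rintro (h | h)
        · rw [← h]
          exact p.adj_getVert_succ (by omega)
        · rw [← h]
          exact (p.adj_getVert_succ (by omega)).symm
  obtain ⟨r⟩ := hH.connected.nonempty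
  by_cases hsub : ∀ v, v = r
  · exact ⟨r, r, .nil, by simp, fun v => by simp [hsub v]⟩
  push Not at hsub
  obtain ⟨s, hs⟩ := hsub
  have hpath : ∀ x y, ∃ p : H.Walk x y, p.IsPath := fun x y => (hH.existsUnique_path x y).exists
  obtain ⟨p₀, hp₀⟩ := hpath r s
  obtain ⟨a, q₀, hq₀, ha⟩ := exists_append_leaf hac p₀ hp₀ hs.symm
  obtain ⟨s', hs'⟩ : ∃ s', s' ≠ a := by
    by_cases h : r = a
    · exact ⟨s, fun e => hs (e.trans h.symm)⟩
    · exact ⟨r, h⟩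
  have hend : ∀ {v b : β} (p : H.Walk a v) (q : H.Walk v b), a ≠ v → (p.append q).IsPath →
      a ≠ b := by
    rintro v b p q hav hpq rfl
    have := Walk.length_eq_zero_iff.2 (Walk.isPath_iff_nil.1 hpq)
    rw [Walk.length_append] at this
    exact hav (Walk.eq_of_length_eq_zero (p := p) (by omega))
  obtain ⟨p₁, hp₁⟩ := hpath a s'
  obtain ⟨b, q₁, hq₁, hb⟩ := exists_append_leaf hac p₁ hp₁ hs'.symm
  refine ⟨a, b, _, hq₁, fun v => ?_⟩
  by_cases hav : a = v
  · subst hav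
    exact Walk.start_mem_support _
  -- A path from `a` through `v` ends in a leaf other than `a`, which must be `b`.
  obtain ⟨p₂, hp₂⟩ := hpath a v
  obtain ⟨b', q₂, hq₂, hb'⟩ := exists_append_leaf hac p₂ hp₂ hav
  have hbb : b' = b := by
    by_contra hne
    have h3 : ({a, b, b'} : Set β) ⊆ {x : β | (H.neighborSet x).ncard = 1} := by
      rintro x (rfl | rfl | rfl) <;> assumption
    have := Set.ncard_le_ncard h3 (Set.toFinite _)
    rw [Set.ncard_eq_three.2 ⟨a, b, b', hend p₁ q₁ hs'.symm hq₁, hend p₂ q₂ hav hq₂,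
      fun e => hne e.symm, rfl⟩] at this
    omega
  subst hbb
  rw [(hH.existsUnique_path a b').unique hq₁ hq₂]
  simp [Walk.mem_support_append_iff]

/-- Every branch of `G` contains a leaf of any spanning tree of `G`. -/
theorem Branch.exists_leaf {V : Type*} [Finite V] {G T : SimpleGraph V} (hT : T.IsTree)
    (hTG : T ≤ G) {c : V} {E : Set V} (hE : Branch G Set.univ c E) :
    ∃ v ∈ E, (T.neighborSet v).ncard = 1 := by
  obtain ⟨e, he⟩ := hE.sep.nonempty
  have hce : c ≠ e := fun h => hE.sep.notMem (h ▸ he)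
  obtain ⟨p, hp, -⟩ := hT.existsUnique_path c e
  obtain ⟨b, q, hq, hb⟩ := exists_append_leaf hT.isAcyclic p hp hce
  refine ⟨b, ?_, hb⟩
  have hcq : c ∉ q.support := fun hc => hq.ne_of_mem_support_of_append hce
    p.start_mem_support hc rfl
  have key : ∀ {x y : V} (r : T.Walk x y), x ∈ E → c ∉ r.support → y ∈ E := by
    intro x y r
    induction r with
    | nil => exact fun h _ => h
    | cons hadj r ih =>
      intro hx hc
      rw [Walk.support_cons, List.mem_cons, not_or] at hc
      refine ih (hE.sep.closed _ hx _ (Set.mem_univ _) ?_ (hTG hadj)) hc.2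
      rintro rfl
      exact hc.2 r.start_mem_support
  exact key q he hcq

/-! ### Growing spanning trees along paths -/

variable {V : Type*} {G : SimpleGraph V}

/-- `G[S]` has a spanning tree whose vertices of degree at most one all lie in `L`. The tree is
given as an acyclic subgraph of `G` with all its edges inside `S`. -/
def HasTree (G : SimpleGraph V) (S L : Set V) : Prop :=
  ∃ T : SimpleGraph V, T ≤ G ∧ T.IsAcyclic ∧ (∀ u ∈ S, ∀ v ∈ S, T.Reachable u v) ∧
    (∀ u v, T.Adj u v → u ∈ S) ∧ ∀ v ∈ S, (T.neighborSet v).Subsingleton → v ∈ L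

/-- Attaching a new vertex `w` at `u`; when `S` has another vertex, `u` stops being a leaf. -/
theorem HasTree.attach {S L L' : Set V} {u w : V} (h : HasTree G S L) (hu : u ∈ S) (hw : w ∉ S)
    (huw : G.Adj u w) (hL : L ⊆ insert u L') (hL' : u ∈ L' ∨ S.Nontrivial) :
    HasTree G (insert w S) (insert w L') := by
  obtain ⟨T, hTG, hac, hreach, hS, hleaf⟩ := h
  have hadj : ∀ x y, (T ⊔ edge u w).Adj x y ↔
      T.Adj x y ∨ ((x = u ∧ y = w ∨ x = w ∧ y = u) ∧ x ≠ y) := by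
    intro x y
    rw [sup_adj, edge_adj]
  have hwT : ∀ x, ¬ T.Adj w x := fun x hx => hw (hS _ _ hx)
  refine ⟨T ⊔ edge u w, ?_, ?_, ?_, ?_, ?_⟩
  · intro x y hxy
    rcases (hadj x y).1 hxy with h | ⟨⟨rfl, rfl⟩ | ⟨rfl, rfl⟩, -⟩
    · exact hTG h
    · exact huw
    · exact huw.symm
  · refine hac.sup_edge_of_not_reachable fun ⟨p⟩ => ?_
    have hp := p.reverse
    cases hp with
    | nil => exact huw.ne rfl
    | cons h _ => exact hwT _ h
  · have hub : ∀ x ∈ insert w S, (T ⊔ edge u w).Reachable x u := by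
      rintro x (rfl | hx)
      · exact Adj.reachable ((hadj _ _).2 (.inr ⟨.inr ⟨rfl, rfl⟩, huw.ne'⟩))
      · exact (hreach x hx u hu).mono le_sup_left
    exact fun x hx y hy => (hub x hx).trans (hub y hy).symm
  · intro x y hxy
    rcases (hadj x y).1 hxy with h | ⟨⟨rfl, rfl⟩ | ⟨rfl, rfl⟩, -⟩
    · exact .inr (hS _ _ h)
    · exact .inr hu
    · exact .inl rfl
  · rintro v (rfl | hv) hsub
    · exact .inl rfl
    right
    by_cases hvu : v = u
    · subst hvu
      rcases hL' with h | hnt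
      · exact h
      exfalso
      obtain ⟨z, hz, hzv⟩ := hnt.exists_ne v
      obtain ⟨p⟩ := hreach v hv z hz
      cases p with
      | nil => exact hzv rfl
      | @cons _ y _ h _ =>
        have : y = w := hsub ((hadj _ _).2 (.inl h))
          ((hadj _ _).2 (.inr ⟨.inl ⟨rfl, rfl⟩, huw.ne⟩))
        subst this
        exact hwT _ h.symm
    · refine (hL (hleaf v hv ?_)).resolve_left hvu
      exact fun x hx y hy => hsub ((hadj _ _).2 (.inl hx)) ((hadj _ _).2 (.inl hy))

/-- Attaching a path at its first vertex `u` adds at most its last vertex to the leaves. -/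
theorem HasTree.attach_path {u b : V} (p : G.Walk u b) (hp : p.IsPath) :
    ∀ {S L : Set V}, HasTree G S (insert u L) → u ∈ S → S.Nontrivial →
      (∀ x ∈ p.support, x ∈ S → x = u) → HasTree G (S ∪ {x | x ∈ p.support}) (insert b L) := by
  induction p with
  | nil =>
    intro S L h hu _ _
    convert h using 1
    ext x
    simp only [Walk.support_nil, List.mem_singleton, Set.mem_union, Set.mem_ofPred_eq]
    exact ⟨fun h => h.elim id (fun e => e ▸ hu), .inl⟩
  | @cons u v b huv q ih =>
    intro S L h hu hnt hdisj
    rw [Walk.cons_isPath_iff] at hp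
    have hvS : v ∉ S := fun hv => huv.ne' (hdisj v (by simp) hv)
    have h1 : HasTree G (insert v S) (insert v L) :=
      h.attach hu hvS huv subset_rfl (.inr hnt)
    have := ih hp.1 h1 (Set.mem_insert _ _) (hnt.mono (Set.subset_insert _ _)) (by
      rintro x hx (rfl | hxS)
      · rfl
      · have := hdisj x (by simp [hx]) hxS
        subst this
        exact absurd hx hp.2)
    convert this using 1
    ext x
    simp only [Walk.support_cons, List.mem_cons, Set.mem_union, Set.mem_ofPred_eq,
      Set.mem_insert_iff]
    constructor
    · rintro (h | rfl | h)
      · exact .inl (.inr h)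
      · exact .inl (.inr hu)
      · exact .inr h
    · rintro ((rfl | h) | h)
      · exact .inr (.inr q.start_mem_support)
      · exact .inl h
      · exact .inr (.inr h)

/-- A path is a tree with at most two leaves. -/
theorem HasTree.of_path {a b : V} (p : G.Walk a b) (hp : p.IsPath) :
    HasTree G {x | x ∈ p.support} {a, b} := by
  have h0 : HasTree G {a} {a} := by
    refine ⟨⊥, bot_le, isAcyclic_bot, ?_, ?_, fun v hv _ => hv⟩
    · rintro u rfl v rfl
      exact .refl _
    · intro u v h
      exact absurd h (by simp)
  cases p with
  | nil => simpa using h0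
  | @cons _ v _ hav q =>
    rw [Walk.cons_isPath_iff] at hp
    have h1 : HasTree G (insert v {a}) (insert v {a}) :=
      h0.attach rfl (by simpa using hav.ne') hav (by simp) (.inl rfl)
    have := HasTree.attach_path q hp.1 h1 (Set.mem_insert _ _)
      ⟨v, by simp, a, by simp, hav.ne'⟩ (by
        rintro x hx (rfl | rfl)
        · rfl
        · exact absurd hx hp.2)
    convert this using 1
    · ext x
      simp only [Walk.support_cons, List.mem_cons, Set.mem_union, Set.mem_ofPred_eq,
        Set.mem_insert_iff, Set.mem_singleton_iff]
      constructor
      · rintro (h | h)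
        · exact .inl (.inr h)
        · exact .inr h
      · rintro ((rfl | h) | h)
        · exact .inr q.start_mem_support
        · exact .inl h
        · exact .inr h
    · exact Set.pair_comm _ _

end Trees

/-! ### Blocks and the block-cutpoint tree -/

section Blocks

variable {V : Type*} {G : SimpleGraph V}

/-- `G[B]` is connected and has no cut-vertex; the empty set is allowed. -/
def NonSep (G : SimpleGraph V) (B : Set V) : Prop :=
  ConnIn G B ∧ ∀ v ∈ B, ConnIn G (B \ {v})

theorem isBlock_iff {B : Set V} : IsBlock G B ↔
    B.Nonempty ∧ NonSep G B ∧ ∀ B', B ⊆ B' → NonSep G B' → B = B' := by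
  simp only [IsBlock, connected_iff, ← connIn_iff, NonSep, Set.nonempty_coe_sort]
  constructor
  · rintro ⟨⟨h1, h2⟩, h3, h4⟩
    exact ⟨h2, ⟨h1, h3⟩, fun B' hB h => h4 B' hB ⟨h.1, h2.mono hB⟩ h.2⟩
  · rintro ⟨h2, ⟨h1, h3⟩, h4⟩
    exact ⟨⟨h1, h2⟩, h3, fun B' hB h h' => h4 B' hB ⟨h.1, h'⟩⟩

theorem isCutVertex_iff {c : V} : IsCutVertex G c ↔ Cut G Set.univ c := by
  rw [IsCutVertex, ← connIn_iff]
  constructor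
  · intro h
    simp only [ConnIn, not_forall] at h
    obtain ⟨a, ha, b, hb, hab⟩ := h
    refine ⟨Set.mem_univ _, {x | JoinedIn G {u | u ≠ c} a x}, Set.subset_univ _,
      fun h => h.right_mem rfl, ⟨a, .refl ha⟩, ⟨b, Set.mem_univ _, hb, hab⟩, ?_⟩
    exact fun u hu w _ hwc huw => JoinedIn.trans hu (.of_adj hu.right_mem hwc huw)
  · rintro ⟨-, D, hD⟩ h
    obtain ⟨d, hd⟩ := hD.nonempty
    obtain ⟨y, -, hyc, hyD⟩ := hD.rest
    exact hyD (hD.subset_of_conn h (Set.subset_univ _) (fun h => h rfl)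
      (fun e => hD.notMem (e ▸ hd)) hd hyc)

theorem NonSep.exists_block [Finite V] {A : Set V} (hA : NonSep G A) (hne : A.Nonempty) :
    ∃ B, IsBlock G B ∧ A ⊆ B := by
  obtain ⟨B, hAB, hB⟩ := Set.Finite.exists_le_maximal
    (s := {B : Set V | NonSep G B}) (Set.toFinite _) (a := A) hA
  exact ⟨B, isBlock_iff.2 ⟨hne.mono hAB, hB.prop,
    fun B' h h' => subset_antisymm h (hB.le_of_ge h' h)⟩, hAB⟩

theorem nonSep_singleton (u : V) : NonSep G {u} := by
  constructor
  · rintro a rfl b rfl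
    exact .refl rfl
  · rintro v rfl a ha
    exact absurd ha.1 ha.2

theorem nonSep_pair {u v : V} (h : G.Adj u v) : NonSep G {u, v} := by
  constructor
  · apply ConnIn.of_hub u
    rintro a (rfl | rfl)
    · exact .refl (by simp)
    · exact .of_adj (by simp) (by simp) h.symm
  · intro w hw a ha b hb
    have : a = b := by
      simp only [Set.mem_sdiff, Set.mem_insert_iff, Set.mem_singleton_iff] at ha hb hw
      grind
    subst this
    exact .refl ha

/-- Two blocks through `c` that are joined by a path avoiding `c` coincide: together with the path
they form a nonseparable set. -/
theorem _root_.IsBlock.eq_of_joined {B B' : Set V} (hB : IsBlock G B)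
    (hB' : IsBlock G B') {c b b' : V} (hcB : c ∈ B) (hcB' : c ∈ B') (hb : b ∈ B) (hb' : b' ∈ B')
    (hbc : b ≠ c) (hbc' : b' ≠ c)
    (hj : JoinedIn G {c}ᶜ b b') : B = B' := by
  classical
  rw [isBlock_iff] at hB hB'
  obtain ⟨q₀, hq₀⟩ := hj
  obtain ⟨q, hq, hqc⟩ : ∃ q : G.Walk b b', q.IsPath ∧ c ∉ q.support :=
    ⟨q₀.bypass, q₀.bypass_isPath, fun h => hq₀ c (q₀.support_bypass_subset_support h) rfl⟩
  set U : Set V := B ∪ B' ∪ {x | x ∈ q.support} with hU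
  have hBU : B ⊆ U := fun x hx => .inl (.inl hx)
  have hBU' : B' ⊆ U := fun x hx => .inl (.inr hx)
  -- Deleting `x ≠ c` leaves every vertex joined to `c`.
  have key : ∀ x, x ≠ c → ∀ y ∈ U \ {x}, JoinedIn G (U \ {x}) y c := by
    intro x hxc
    have inB : ∀ C : Set V, C ⊆ U → NonSep G C → c ∈ C → ∀ y ∈ C \ {x},
        JoinedIn G (U \ {x}) y c := by
      intro C hCU hC hcC y hy
      have hcon : ConnIn G (C \ {x}) := by
        by_cases hx : x ∈ C
        · exact hC.2 x hx
        · rw [Set.sdiff_singleton_eq_self hx]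
          exact hC.1
      exact (hcon y hy c ⟨hcC, hxc.symm⟩).mono (Set.sdiff_subset_sdiff_left hCU)
    rintro y ⟨(hy | hy) | hy, hyx⟩
    · exact inB B hBU hB.2.1 hcB y ⟨hy, hyx⟩
    · exact inB B' hBU' hB'.2.1 hcB' y ⟨hy, hyx⟩
    · have hyx' : y ≠ x := hyx
      obtain ⟨q₁, q₂, -, -, rfl⟩ := hq.mem_support_iff_exists_append.1 hy
      by_cases hx1 : x ∈ q₁.support
      · have hx2 : x ∉ q₂.support := by
          intro hx2
          exact hq.ne_of_mem_support_of_append hyx'.symm hx1 hx2 rfl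
        refine JoinedIn.trans (v := b') ⟨q₂, fun z hz => ⟨.inr ?_, ?_⟩⟩
          (inB B' hBU' hB'.2.1 hcB' b' ⟨hb', ?_⟩)
        · exact (Walk.mem_support_append_iff _ _).2 (.inr hz)
        · rintro rfl
          exact hx2 hz
        · rintro rfl
          exact hx2 q₂.end_mem_support
      · refine JoinedIn.trans (v := b) ⟨q₁.reverse, fun z hz => ⟨.inr ?_, ?_⟩⟩
          (inB B hBU hB.2.1 hcB b ⟨hb, ?_⟩)
        · exact (Walk.mem_support_append_iff _ _).2 (.inl (by simpa using hz))
        · rintro rfl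
          exact hx1 (by simpa using hz)
        · rintro rfl
          exact hx1 q₁.start_mem_support
  have hNS : NonSep G U := by
    constructor
    · apply ConnIn.of_hub c
      intro y hy
      by_cases hyb : y = b
      · subst hyb
        exact (hB.2.1.1 y hb c hcB).mono hBU
      · exact (key b hbc y ⟨hy, hyb⟩).mono Set.sdiff_subset
    · intro x _
      by_cases hxc : x = c
      · subst hxc
        apply ConnIn.of_hub b
        have hq' : ∀ z ∈ q.support, JoinedIn G (U \ {x}) z b := by
          intro z hz
          refine JoinedIn.symm ⟨q.takeUntil z hz, fun w hw => ?_⟩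
          have := q.support_takeUntil_subset_support hz hw
          refine ⟨.inr this, ?_⟩
          rintro rfl
          exact hqc this
        rintro y ⟨(hy | hy) | hy, hyx⟩
        · exact (hB.2.1.2 x hcB y ⟨hy, hyx⟩ b ⟨hb, hbc⟩).mono
            (Set.sdiff_subset_sdiff_left hBU)
        · exact ((hB'.2.1.2 x hcB' y ⟨hy, hyx⟩ b' ⟨hb', hbc'⟩).mono
            (Set.sdiff_subset_sdiff_left hBU')).trans (hq' b' q.end_mem_support)
        · exact hq' y hy
      · exact ConnIn.of_hub c (key x hxc)
  exact (hB.2.2 U hBU hNS).trans (hB'.2.2 U hBU' hNS).symm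

theorem connIn_compl_of_not_cut {u : V} (h : ¬ Cut G Set.univ u) : ConnIn G {u}ᶜ := by
  rw [← isCutVertex_iff, IsCutVertex, not_not, ← connIn_iff] at h
  exact h

/-- A block `B ≠ B'` is not reduced to a single vertex of the block `B'`, by maximality. -/
theorem _root_.IsBlock.exists_ne {B B' : Set V} (hB : IsBlock G B) (hB' : IsBlock G B')
    (hne : B ≠ B') {u : V} (hu' : u ∈ B') : ∃ b ∈ B, b ≠ u := by
  by_contra! h
  rw [isBlock_iff] at hB hB'
  refine hne (hB.2.2 B' (fun x hx => ?_) hB'.2.1)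
  rw [h x hx]
  exact hu'

/-- Distinct blocks meet only in cut-vertices. -/
theorem _root_.IsBlock.cut_of_mem {B B' : Set V} (hB : IsBlock G B) (hB' : IsBlock G B')
    (hne : B ≠ B') {u : V} (hu : u ∈ B) (hu' : u ∈ B') : Cut G Set.univ u := by
  by_contra hcut
  obtain ⟨b, hb, hbu⟩ := hB.exists_ne hB' hne hu'
  obtain ⟨b', hb', hbu'⟩ := hB'.exists_ne hB hne.symm hu
  exact hne (hB.eq_of_joined hB' hu hu' hb hb' hbu hbu'
    (connIn_compl_of_not_cut hcut b hbu b' hbu'))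

theorem exists_block_of_adj [Finite V] {u v : V} (h : G.Adj u v) :
    ∃ B, IsBlock G B ∧ u ∈ B ∧ v ∈ B := by
  obtain ⟨B, hB, hs⟩ := (nonSep_pair h).exists_block (by simp)
  exact ⟨B, hB, hs (by simp), hs (by simp)⟩

/-- The node of the block-cutpoint tree given by a cut-vertex. -/
def cutNode (c : {v : V // IsCutVertex G v}) : BCVert G := Sum.inl c

/-- The node of the block-cutpoint tree given by a block. -/
def blockNode (B : {B : Set V // IsBlock G B}) : BCVert G := Sum.inr B

theorem node_cases (x : BCVert G) : (∃ c, x = cutNode c) ∨ ∃ B, x = blockNode B := by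
  cases x with
  | inl c => exact .inl ⟨c, rfl⟩
  | inr B => exact .inr ⟨B, rfl⟩

theorem bcGraph_adj_iff (c : {v : V // IsCutVertex G v}) (B : {B : Set V // IsBlock G B}) :
    (bcGraph G).Adj (cutNode c) (blockNode B) ↔ c.1 ∈ B.1 := by
  constructor
  · rintro ⟨-, ⟨c', B', h1, h2, h3⟩ | ⟨c', B', h1, -, -⟩⟩
    · cases h1
      cases h2
      exact h3
    · cases h1
  · exact fun h => ⟨fun e => Sum.inl_ne_inr e, .inl ⟨c, B, rfl, rfl, h⟩⟩

theorem not_bcGraph_adj_cutNode (c d : {v : V // IsCutVertex G v}) :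
    ¬ (bcGraph G).Adj (cutNode c) (cutNode d) := by
  rintro ⟨-, ⟨c', B', -, h2, -⟩ | ⟨c', B', -, h2, -⟩⟩ <;> cases h2

theorem not_bcGraph_adj_blockNode (B C : {B : Set V // IsBlock G B}) :
    ¬ (bcGraph G).Adj (blockNode B) (blockNode C) := by
  rintro ⟨-, ⟨c', B', h1, -, -⟩ | ⟨c', B', h1, -, -⟩⟩ <;> cases h1

theorem connIn_univ (hG : G.Connected) : ConnIn G Set.univ := fun u _ v _ => by
  obtain ⟨p⟩ := hG.preconnected u v
  exact ⟨p, fun _ _ => Set.mem_univ _⟩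

theorem bcGraph_connected [Finite V] (hG : G.Connected) : (bcGraph G).Connected := by
  have hshare : ∀ (B B' : {B : Set V // IsBlock G B}) (u : V), u ∈ B.1 → u ∈ B'.1 →
      (bcGraph G).Reachable (blockNode B) (blockNode B') := by
    intro B B' u hu hu'
    by_cases h : B = B'
    · subst h
      exact .refl _
    · have hcut := isCutVertex_iff.2 (B.2.cut_of_mem B'.2 (fun e => h (Subtype.ext e)) hu hu')
      exact ((bcGraph_adj_iff ⟨u, hcut⟩ B).2 hu).symm.reachable.trans
        ((bcGraph_adj_iff ⟨u, hcut⟩ B').2 hu').reachable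
  have hblocks : ∀ (u v : V) (p : G.Walk u v) (B B' : {B : Set V // IsBlock G B}), u ∈ B.1 →
      v ∈ B'.1 → (bcGraph G).Reachable (blockNode B) (blockNode B') := by
    intro u v p
    induction p with
    | nil => exact fun B B' hu hv => hshare B B' _ hu hv
    | cons h q ih =>
      intro B B' hu hv
      obtain ⟨C, hC, huC, hwC⟩ := exists_block_of_adj h
      exact (hshare B ⟨C, hC⟩ _ hu huC).trans (ih ⟨C, hC⟩ B' hwC hv)
  have hmem : ∀ u : V, ∃ B : {B : Set V // IsBlock G B}, u ∈ B.1 := by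
    intro u
    obtain ⟨B, hB, hu⟩ := (nonSep_singleton (G := G) u).exists_block (by simp)
    exact ⟨⟨B, hB⟩, hu rfl⟩
  have hnode : ∀ x : BCVert G, ∃ B : {B : Set V // IsBlock G B},
      (bcGraph G).Reachable x (blockNode B) := by
    intro x
    obtain ⟨c, rfl⟩ | ⟨B, rfl⟩ := node_cases x
    · obtain ⟨B, hB⟩ := hmem c.1
      exact ⟨B, ((bcGraph_adj_iff c B).2 hB).reachable⟩
    · exact ⟨B, .refl _⟩
  obtain ⟨v₀⟩ := hG.nonempty
  obtain ⟨B₀, -⟩ := hmem v₀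
  refine @Connected.mk _ _ (fun x y => ?_) ⟨blockNode B₀⟩
  obtain ⟨B, hB⟩ := hnode x
  obtain ⟨C, hC⟩ := hnode y
  obtain ⟨u, hu⟩ := (isBlock_iff.1 B.2).1
  obtain ⟨v, hv⟩ := (isBlock_iff.1 C.2).1
  obtain ⟨p⟩ := hG.preconnected u v
  exact (hB.trans (hblocks u v p B C hu hv)).trans hC.symm

/-- In a connected graph with a cut-vertex `c`, no block is contained in `{c}`. -/
theorem _root_.IsBlock.exists_ne_cut [Finite V] (hG : G.Connected) {B : Set V}
    (hB : IsBlock G B) {c : V} (hcut : Cut G Set.univ c) : ∃ b ∈ B, b ≠ c := by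
  obtain ⟨D, hD⟩ := hcut.2
  obtain ⟨d, hd, hcd⟩ := hD.exists_adj (connIn_univ hG) (Set.mem_univ c)
  obtain ⟨B', hB', hcB', hdB'⟩ := exists_block_of_adj hcd
  by_cases h : B = B'
  · exact ⟨d, h ▸ hdB', hcd.ne'⟩
  · exact hB.exists_ne hB' h hcB'

theorem bcGraph_isAcyclic [Finite V] (hG : G.Connected) : (bcGraph G).IsAcyclic := by
  -- The edge `cB` is a bridge: it separates the nodes on the side of `B \ {c}` in `G - c`.
  have main : ∀ (c : {v : V // IsCutVertex G v}) (B : {B : Set V // IsBlock G B}),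
      c.1 ∈ B.1 → ¬ ((bcGraph G).deleteEdges {s(cutNode c, blockNode B)}).Reachable
        (blockNode B) (cutNode c) := by
    intro c B hcB ⟨p⟩
    obtain ⟨b₀, hb₀, hb₀c⟩ := B.2.exists_ne_cut hG (isCutVertex_iff.1 c.2)
    let X : BCVert G → Prop := fun x => Sum.elim
      (fun v => JoinedIn G {c.1}ᶜ b₀ v.1)
      (fun B' => ∃ b ∈ B'.1, JoinedIn G {c.1}ᶜ b₀ b) x
    have hstep : ∀ x y, ((bcGraph G).deleteEdges {s(cutNode c, blockNode B)}).Adj x y → X x →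
        X y := by
      intro x y hadj hx
      obtain ⟨v, rfl⟩ | ⟨B', rfl⟩ := node_cases x <;>
        obtain ⟨w, rfl⟩ | ⟨C, rfl⟩ := node_cases y
      · exact absurd (deleteEdges_adj.1 hadj).1 (not_bcGraph_adj_cutNode _ _)
      · exact ⟨v.1, (bcGraph_adj_iff v C).1 (deleteEdges_adj.1 hadj).1, hx⟩
      · obtain ⟨hadj, hne⟩ := deleteEdges_adj.1 hadj
        have hwB := (bcGraph_adj_iff w B').1 hadj.symm
        obtain ⟨b, hb, hjb⟩ := hx
        by_cases hwc : w = c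
        · subst hwc
          have := B.2.eq_of_joined B'.2 hcB hwB hb₀ hb hb₀c hjb.right_mem hjb
          have hBB : B = B' := Subtype.ext this
          subst hBB
          exact absurd (by simp [Sym2.eq_swap]) hne
        · have hwc' : w.1 ≠ c.1 := fun e => hwc (Subtype.ext e)
          refine JoinedIn.trans hjb ?_
          have hcon : ConnIn G (B'.1 \ {c.1}) := by
            by_cases hc : c.1 ∈ B'.1
            · exact (isBlock_iff.1 B'.2).2.1.2 _ hc
            · rw [Set.sdiff_singleton_eq_self hc]
              exact (isBlock_iff.1 B'.2).2.1.1
          exact (hcon b ⟨hb, hjb.right_mem⟩ w.1 ⟨hwB, hwc'⟩).mono fun z hz => hz.2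
      · exact absurd (deleteEdges_adj.1 hadj).1 (not_bcGraph_adj_blockNode _ _)
    have hwalk : ∀ {x y} (p : ((bcGraph G).deleteEdges {s(cutNode c, blockNode B)}).Walk x y),
        X x → X y := by
      intro x y p
      induction p with
      | nil => exact id
      | cons h _ ih => exact fun hx => ih (hstep _ _ h hx)
    have : X (cutNode c) := hwalk p ⟨b₀, hb₀, .refl hb₀c⟩
    exact JoinedIn.right_mem this rfl
  rw [isAcyclic_iff_forall_adj_isBridge]
  intro x y hadj
  obtain ⟨v, rfl⟩ | ⟨B, rfl⟩ := node_cases x <;>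
    obtain ⟨w, rfl⟩ | ⟨C, rfl⟩ := node_cases y
  · exact absurd hadj (not_bcGraph_adj_cutNode _ _)
  · rw [isBridge_iff]
    exact fun h => main v C ((bcGraph_adj_iff v C).1 hadj) h.symm
  · rw [isBridge_iff, Sym2.eq_swap]
    exact main w B ((bcGraph_adj_iff w B).1 hadj.symm)
  · exact absurd hadj (not_bcGraph_adj_blockNode _ _)

/-- A cut-vertex is not a leaf of the block-cutpoint tree: it has blocks on both sides. -/
theorem ncard_neighborSet_cutNode_ne_one [Finite V] (hG : G.Connected)
    (c : {v : V // IsCutVertex G v}) : ((bcGraph G).neighborSet (cutNode c)).ncard ≠ 1 := by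
  intro h
  obtain ⟨x, hx⟩ := Set.ncard_eq_one.1 h
  obtain ⟨-, D, hD⟩ := isCutVertex_iff.1 c.2
  have hu := connIn_univ hG
  obtain ⟨d, hd, hcd⟩ := hD.exists_adj hu (Set.mem_univ _)
  obtain ⟨d', hd', hcd'⟩ := hD.compl.exists_adj hu (Set.mem_univ _)
  obtain ⟨B, hB, hcB, hdB⟩ := exists_block_of_adj hcd
  obtain ⟨B', hB', hcB', hdB'⟩ := exists_block_of_adj hcd'
  have h1 : blockNode ⟨B, hB⟩ ∈ (bcGraph G).neighborSet (cutNode c) :=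
    (bcGraph_adj_iff c ⟨B, hB⟩).2 hcB
  have h2 : blockNode ⟨B', hB'⟩ ∈ (bcGraph G).neighborSet (cutNode c) :=
    (bcGraph_adj_iff c ⟨B', hB'⟩).2 hcB'
  rw [hx, Set.mem_singleton_iff] at h1 h2
  have hBB : B = B' := by
    have := Sum.inr.inj (h1.trans h2.symm)
    exact congrArg Subtype.val this
  subst hBB
  exact hd'.1.2 (hD.subset_of_conn ((isBlock_iff.1 hB).2.1.2 _ hcB) (Set.subset_univ _)
    (by simp) ⟨hdB, hcd.ne'⟩ hd ⟨hdB', hcd'.ne'⟩)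

/-- The set of non-cut-vertices in a block node; the value on cut-vertex nodes is irrelevant. -/
def interior (G : SimpleGraph V) (x : BCVert G) : Set V :=
  Sum.elim (fun _ => ∅) (fun B => {v ∈ B.1 | ¬ Cut G Set.univ v}) x

/-- A leaf block `B` has exactly one cut-vertex `c`, and `B \ {c}` is an end. -/
theorem exists_of_leaf [Finite V] (hG : G.Connected) {x : BCVert G}
    (hx : ((bcGraph G).neighborSet x).ncard = 1) :
    ∃ (B : {B : Set V // IsBlock G B}) (c : V), x = blockNode B ∧ c ∈ B.1 ∧
      Cut G Set.univ c ∧ interior G x = B.1 \ {c} ∧ Branch G Set.univ c (B.1 \ {c}) ∧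
      ∀ y ∈ B.1 \ {c}, ¬ Cut G Set.univ y := by
  obtain ⟨c, rfl⟩ | ⟨B, rfl⟩ := node_cases x
  · exact absurd hx (ncard_neighborSet_cutNode_ne_one hG c)
  obtain ⟨y, hy⟩ := Set.ncard_eq_one.1 hx
  have hyB : (bcGraph G).Adj (blockNode B) y := by
    have : y ∈ (bcGraph G).neighborSet (blockNode B) := by rw [hy]; rfl
    exact this
  obtain ⟨c, rfl⟩ | ⟨C, rfl⟩ := node_cases y
  swap
  · exact absurd hyB (not_bcGraph_adj_blockNode _ _)
  have hcB := (bcGraph_adj_iff c B).1 hyB.symm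
  have hc := isCutVertex_iff.1 c.2
  have honly : ∀ v ∈ B.1, Cut G Set.univ v → v = c.1 := by
    intro v hv hcut
    have : cutNode ⟨v, isCutVertex_iff.2 hcut⟩ ∈ (bcGraph G).neighborSet (blockNode B) :=
      ((bcGraph_adj_iff ⟨v, isCutVertex_iff.2 hcut⟩ B).2 hv).symm
    rw [hy, Set.mem_singleton_iff] at this
    have := Sum.inl.inj this
    exact congrArg Subtype.val this
  have hnc : ∀ y ∈ B.1 \ {c.1}, ¬ Cut G Set.univ y := fun y hy h => hy.2 (honly y hy.1 h)
  have hint : interior G (blockNode B) = B.1 \ {c.1} := by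
    ext v
    constructor
    · rintro ⟨hv, hcut⟩
      exact ⟨hv, fun e => hcut (by rw [Set.mem_singleton_iff.1 e]; exact hc)⟩
    · exact fun hv => ⟨hv.1, hnc v hv⟩
  refine ⟨B, c.1, rfl, hcB, hc, hint, ⟨Set.mem_univ _, ⟨Set.subset_univ _, by simp, ?_, ?_, ?_⟩,
    (isBlock_iff.1 B.2).2.1.2 _ hcB⟩, hnc⟩
  · obtain ⟨b, hb, hbc⟩ := B.2.exists_ne_cut hG hc
    exact ⟨b, hb, hbc⟩
  · obtain ⟨D, hD⟩ := hc.2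
    by_contra! h
    obtain ⟨d, hd⟩ := hD.nonempty
    obtain ⟨y, -, hyc, hyD⟩ := hD.rest
    exact hyD (hD.subset_of_conn ((isBlock_iff.1 B.2).2.1.2 _ hcB) (Set.subset_univ _) (by simp)
      (h d (Set.mem_univ _) (fun e => hD.notMem (e ▸ hd))) hd (h y (Set.mem_univ _) hyc))
  · rintro u hu w - hwc huw
    refine ⟨?_, hwc⟩
    obtain ⟨B', hB', huB', hwB'⟩ := exists_block_of_adj huw
    have hcu : c.1 ≠ u := fun e => hu.2 e.symm
    have := B.2.eq_of_joined hB' hu.1 huB' hcB hwB' hcu huw.ne'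
      (connIn_compl_of_not_cut (hnc u hu) _ hcu _ huw.ne')
    rw [this]
    exact hwB'

/-- Conversely an end at `c`, together with `c`, is a leaf block. -/
theorem IsEnd.exists_leaf [Finite V] (hG : G.Connected) {E : Set V} (hE : IsEnd G Set.univ E) :
    ∃ x : BCVert G, ((bcGraph G).neighborSet x).ncard = 1 ∧ interior G x = E := by
  obtain ⟨⟨c, hc⟩, hnc⟩ := hE
  have hu := connIn_univ hG
  have hdiff : insert c E \ {c} = E := by
    rw [Set.insert_sdiff_of_mem _ (Set.mem_singleton c)]
    exact Set.sdiff_singleton_eq_self hc.sep.notMem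
  have hNS : NonSep G (insert c E) := by
    refine ⟨hc.sep.conn_insert hu hc.mem, ?_⟩
    rintro v (rfl | hv)
    · rw [hdiff]
      exact hc.conn
    · have hcv : c ≠ v := fun e => hc.sep.notMem (e ▸ hv)
      apply ConnIn.of_hub c
      rintro y ⟨rfl | hy, hyv⟩
      · exact .refl ⟨by simp, hcv⟩
      · have hcon := connIn_compl_of_not_cut (hnc v hv)
        rcases (hcon y hyv c hcv).stay_or_hit (X := E \ {v}) ⟨hy, hyv⟩ (c := c)
          (fun x hx z hz hzc hxz => ⟨hc.sep.closed x hx.1 z (Set.mem_univ _) hzc hxz, hz⟩)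
          with h | h
        · exact absurd h.right_mem.1 hc.sep.notMem
        · refine h.mono ?_
          rintro z (rfl | hz)
          · exact ⟨by simp, hcv⟩
          · exact ⟨.inr hz.1, hz.2⟩
  have hB : IsBlock G (insert c E) := by
    refine isBlock_iff.2 ⟨by simp, hNS, fun B' hsub hB' => subset_antisymm hsub fun w hw => ?_⟩
    by_cases hwc : w = c
    · exact .inl hwc
    obtain ⟨e, he⟩ := hc.sep.nonempty
    exact .inr (hc.sep.subset_of_conn (hB'.2 c (hsub (by simp))) (Set.subset_univ _) (by simp)
      ⟨hsub (.inr he), fun h => hc.sep.notMem (h ▸ he)⟩ he ⟨hw, hwc⟩)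
  refine ⟨blockNode ⟨_, hB⟩, ?_, ?_⟩
  · rw [Set.ncard_eq_one]
    refine ⟨cutNode ⟨c, isCutVertex_iff.2 hc.cut⟩, ?_⟩
    ext y
    rw [Set.mem_singleton_iff, mem_neighborSet]
    constructor
    · intro hadj
      obtain ⟨v, rfl⟩ | ⟨C, rfl⟩ := node_cases y
      · rcases (bcGraph_adj_iff v ⟨_, hB⟩).1 hadj.symm with h | h
        · exact congrArg cutNode (Subtype.ext h)
        · exact absurd (isCutVertex_iff.1 v.2) (hnc _ h)
      · exact absurd hadj (not_bcGraph_adj_blockNode _ _)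
    · rintro rfl
      exact ((bcGraph_adj_iff _ _).2 (Set.mem_insert _ _)).symm
  · ext v
    constructor
    · rintro ⟨rfl | hv, hcut⟩
      · exact absurd hc.cut hcut
      · exact hv
    · exact fun hv => ⟨.inr hv, hnc v hv⟩

/-- The leaves of the block-cutpoint tree correspond to the ends. -/
theorem ncard_leaves_eq [Finite V] (hG : G.Connected) :
    {x : BCVert G | ((bcGraph G).neighborSet x).ncard = 1}.ncard =
      {E | IsEnd G Set.univ E}.ncard := by
  have himg : interior G '' {x : BCVert G | ((bcGraph G).neighborSet x).ncard = 1} =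
      {E | IsEnd G Set.univ E} := by
    ext E
    constructor
    · rintro ⟨x, hx, rfl⟩
      obtain ⟨B, c, -, -, -, hint, hbr, hnc⟩ := exists_of_leaf hG hx
      change IsEnd G Set.univ _
      rw [hint]
      exact ⟨⟨c, hbr⟩, hnc⟩
    · intro hE
      obtain ⟨x, hx, hxE⟩ := IsEnd.exists_leaf hG hE
      exact ⟨x, hx, hxE⟩
  rw [← himg, Set.InjOn.ncard_image]
  intro x hx y hy hxy
  obtain ⟨B, c, rfl, hcB, hc, hint, hbr, hnc⟩ := exists_of_leaf hG hx
  obtain ⟨B', c', rfl, hcB', hc', hint', hbr', hnc'⟩ := exists_of_leaf hG hy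
  have hEE : B.1 \ {c} = B'.1 \ {c'} := hint.symm.trans (hxy.trans hint')
  have hcc : c = c' := by
    by_contra hne
    obtain ⟨d, hd, hcd⟩ := hbr.sep.exists_adj (connIn_univ hG) (Set.mem_univ _)
    rw [hEE] at hd
    have := hbr'.sep.closed d hd c (Set.mem_univ _) hne hcd.symm
    rw [← hEE] at this
    exact this.2 rfl
  subst hcc
  have : B = B' := by
    apply Subtype.ext
    rw [← Set.insert_sdiff_self_of_mem hcB, ← Set.insert_sdiff_self_of_mem hcB', hEE]
  rw [this]

end Blocks

/-! ### The induction on the number of ends -/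

section Induction

variable {V : Type*} {G : SimpleGraph V}

/-- An end of the graph `G[S]`, seen in `G`, is an end of `G[S]` in the relative sense. -/
theorem IsEnd.of_induce {S : Set V} {F : Set S} (hF : IsEnd (G.induce S) Set.univ F) :
    IsEnd G S (Subtype.val '' F) := by
  obtain ⟨⟨c, hc⟩, hcut⟩ := hF
  refine ⟨⟨c.1, c.2, ⟨?_, ?_, hc.sep.nonempty.image _, ?_, ?_⟩, ?_⟩, ?_⟩
  · rintro _ ⟨x, -, rfl⟩
    exact x.2
  · rintro ⟨x, hx, hxc⟩
    exact hc.sep.notMem (Subtype.ext hxc ▸ hx)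
  · obtain ⟨y, -, hyc, hyF⟩ := hc.sep.rest
    refine ⟨y.1, y.2, fun e => hyc (Subtype.ext e), ?_⟩
    rintro ⟨x, hx, hxy⟩
    exact hyF (Subtype.ext hxy ▸ hx)
  · rintro _ ⟨u, hu, rfl⟩ w hw hwc huw
    exact ⟨⟨w, hw⟩, hc.sep.closed u hu ⟨w, hw⟩ (Set.mem_univ _)
      (fun e => hwc (congrArg Subtype.val e)) huw, rfl⟩
  · rintro _ ⟨u, hu, rfl⟩ _ ⟨v, hv, rfl⟩
    obtain ⟨p, hp⟩ := hc.conn u hu v hv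
    have key : ∀ x ∈ (p.map (Embedding.induce S).toHom).support, x ∈ Subtype.val '' F := by
      intro x hx
      rw [Walk.support_map, List.mem_map] at hx
      obtain ⟨y, hy, rfl⟩ := hx
      exact ⟨y, hp y hy, rfl⟩
    exact ⟨p.map (Embedding.induce S).toHom, key⟩
  · rintro _ ⟨x, hx, rfl⟩ ⟨-, D, hD⟩
    refine hcut x hx ⟨Set.mem_univ _, Subtype.val ⁻¹' D, Set.subset_univ _, hD.notMem, ?_, ?_, ?_⟩
    · obtain ⟨y, hy⟩ := hD.nonempty
      exact ⟨⟨y, hD.sub hy⟩, hy⟩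
    · obtain ⟨y, hy, hyx, hyD⟩ := hD.rest
      exact ⟨⟨y, hy⟩, Set.mem_univ _, fun e => hyx (congrArg Subtype.val e), hyD⟩
    · exact fun u hu w _ hwx huw =>
        hD.closed u.1 hu w.1 w.2 (fun e => hwx (Subtype.ext e)) huw

theorem ncard_ends_induce_le [Finite V] (S : Set V) :
    {F | IsEnd (G.induce S) Set.univ F}.ncard ≤ {E | IsEnd G S E}.ncard := by
  refine Set.ncard_le_ncard_of_injOn (Subtype.val '' ·) (fun F hF => IsEnd.of_induce hF) ?_
    (Set.toFinite _)
  exact (Subtype.val_injective.image_injective).injOn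

/-- A connected set with at most two ends induces a graph whose block-cutpoint tree is a path. -/
theorem inducesPath_of_ends_le_two [Finite V] {S : Set V} (hS : (G.induce S).Connected)
    (he : {E | IsEnd G S E}.ncard ≤ 2) :
    InducesPath (bcGraph (G.induce S)) (Set.univ : Set (BCVert (G.induce S))) := by
  have : Finite (BCVert (G.induce S)) := by
    unfold BCVert
    infer_instance
  refine inducesPath_of_leaves_le_two ⟨bcGraph_connected hS, bcGraph_isAcyclic hS⟩ ?_
  rw [ncard_leaves_eq hS]
  exact (ncard_ends_induce_le S).trans he

theorem ncard_pair_le_two {α : Type*} (a b : α) : ({a, b} : Set α).ncard ≤ 2 :=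
  (Set.ncard_insert_le _ _).trans (by rw [Set.ncard_singleton])

theorem exists_path_of_cons {a b c : V} (p : G.Walk a b) (hp : p.IsPath) (hc : c ∈ p.support)
    (hca : c ≠ a) (hpend : ∀ y ∈ p.support, G.Adj a y → y = c) :
    ∃ (b' : V) (q : G.Walk c b'), q.IsPath ∧ ∀ x, x ∈ q.support ↔ x ∈ p.support ∧ x ≠ a := by
  cases p with
  | nil => exact absurd (by simpa using hc) hca
  | @cons _ w _ h q =>
    have := hpend w (by simp) h
    subst this
    rw [Walk.cons_isPath_iff] at hp
    refine ⟨b, q, hp.1, fun x => ⟨fun hx => ⟨by simp [hx], ?_⟩, ?_⟩⟩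
    · rintro rfl
      exact hp.2 hx
    · rintro ⟨hx, hxa⟩
      simpa [hxa] using hx

/-- A vertex `d` whose only neighbour on a path is `c` is an end of the path, so it can be cut off,
leaving a path that starts at `c`. -/
theorem exists_path_of_pendant {a b c d : V} (p : G.Walk a b) (hp : p.IsPath)
    (hd : d ∈ p.support) (hc : c ∈ p.support) (hcd : c ≠ d)
    (hpend : ∀ y ∈ p.support, G.Adj d y → y = c) :
    ∃ (b' : V) (q : G.Walk c b'), q.IsPath ∧ ∀ x, x ∈ q.support ↔ x ∈ p.support ∧ x ≠ d := by
  by_cases had : d = a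
  · subst had
    exact exists_path_of_cons p hp hc hcd hpend
  by_cases hbd : d = b
  · subst hbd
    obtain ⟨b', q, hq, hqs⟩ := exists_path_of_cons p.reverse hp.reverse (by simpa using hc) hcd
      (fun y hy => hpend y (by simpa using hy))
    exact ⟨b', q, hq, fun x => by simpa using hqs x⟩
  exfalso
  obtain ⟨p₁, p₂, -, -, rfl⟩ := hp.mem_support_iff_exists_append.1 hd
  have h1 : c ∈ p₁.support := by
    obtain ⟨r, hr⟩ : ∃ r, r = p₁.reverse := ⟨_, rfl⟩
    have hsub : ∀ x, x ∈ r.support → x ∈ p₁.support := by simp [hr]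
    cases r with
    | nil => exact absurd rfl had
    | @cons _ w _ h q =>
      have hw := hsub w (by simp)
      rwa [← hpend w ((Walk.mem_support_append_iff _ _).2 (.inl hw)) h]
  have h2 : c ∈ p₂.support := by
    cases p₂ with
    | nil => exact absurd rfl hbd
    | @cons _ w _ h q =>
      have := hpend w (by simp) h
      simp [← this]
  exact hp.ne_of_mem_support_of_append hcd h1 h2 rfl

/-- If `G[S]` has a Hamiltonian path for every connected `S` with at most two ends, then every
connected `S` has a spanning tree with at most as many leaves as `S` has ends (or two). -/
theorem exists_hasTree [Finite V]
    (hbase : ∀ S : Set V, S.Nonempty → ConnIn G S → {E | IsEnd G S E}.ncard ≤ 2 →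
      ∃ (a b : V) (p : G.Walk a b), p.IsPath ∧ {x | x ∈ p.support} = S) :
    ∀ (n : ℕ) (S : Set V), S.Nonempty → ConnIn G S → {E | IsEnd G S E}.ncard = n →
      ∃ L, HasTree G S L ∧ L.ncard ≤ max 2 n := by
  intro n
  induction n using Nat.strong_induction_on with
  | _ n ih =>
  intro S hne hS hn
  by_cases hn2 : n ≤ 2
  · obtain ⟨a, b, p, hp, rfl⟩ := hbase S hne hS (hn ▸ hn2)
    exact ⟨{a, b}, .of_path p hp, (ncard_pair_le_two a b).trans (le_max_left _ _)⟩
  obtain ⟨E, hE⟩ : {E | IsEnd G S E}.Nonempty := by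
    rw [← Set.ncard_pos]
    omega
  -- A maximal branch `C` whose only end is `E`.
  have hstart : E ∈ {C : Set V | (∃ c, Branch G S c C) ∧ E ⊆ C ∧
      ∀ D, IsEnd G S D → D ⊆ C → D = E} := by
    refine ⟨hE.1, subset_rfl, fun D hD hDE => ?_⟩
    obtain ⟨x, hx⟩ := hD.nonempty
    exact hD.eq_of_mem hE hx (hDE hx)
  obtain ⟨C, -, hC⟩ := Set.Finite.exists_le_maximal (Set.toFinite _) hstart
  obtain ⟨⟨c, hbr⟩, hEC, huniq⟩ := hC.prop
  have hlt : {F | IsEnd G (S \ C) F}.ncard < n := by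
    rw [← hn]
    apply Set.ncard_lt_ncard _ (Set.toFinite _)
    refine ⟨fun F hF => IsEnd.of_diff hS hbr hEC huniq
      (fun c' C' h1 h2 h3 h4 => hC.le_of_ge ⟨⟨c', h1⟩, h3, h4⟩ h2) hF, fun h => ?_⟩
    obtain ⟨x, hx⟩ := hE.nonempty
    obtain ⟨⟨v, hv⟩, -⟩ : IsEnd G (S \ C) E := h hE
    exact (hv.sep.sub hx).2 (hEC hx)
  have hcS : c ∈ S \ C := ⟨hbr.mem, hbr.sep.notMem⟩
  obtain ⟨y, hyS, hyc, hyC⟩ := hbr.sep.rest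
  have hconn := hbr.sep.conn_diff hS hbr.mem
  obtain ⟨L, hL, hLcard⟩ := ih _ hlt (S \ C) ⟨c, hcS⟩ hconn rfl
  -- A pendant vertex `d` at `c` forces the Hamiltonian path of `C ∪ {c, d}` to traverse
  -- `C ∪ {c}` starting at `c`.
  obtain ⟨d, ⟨hdS, hdC⟩, hdc, hcd⟩ := hconn.exists_adj hcS ⟨hyS, hyC⟩ hyc
  have hends : {F | IsEnd G (insert d (insert c C)) F}.ncard ≤ 2 := by
    refine (Set.ncard_le_ncard (t := {{d}, E}) (fun F hF => ?_) (Set.toFinite _)).trans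
      (ncard_pair_le_two _ _)
    rcases IsEnd.of_pendant hS hbr hdS hdC hdc hcd hF with h | h
    · exact .inl h
    · exact .inr (huniq F h.1 h.2)
  have hconn' : ConnIn G (insert d (insert c C)) := by
    apply ConnIn.of_hub c
    rintro u (rfl | hu)
    · exact .of_adj (by simp) (by simp) hcd.symm
    · exact (hbr.sep.conn_insert hS hbr.mem u hu c (by simp)).mono (Set.subset_insert _ _)
  obtain ⟨a, b, p, hp, hps⟩ := hbase _ ⟨d, by simp⟩ hconn' hends
  have hmem : ∀ x, x ∈ p.support ↔ x ∈ insert d (insert c C) := fun x => Set.ext_iff.1 hps x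
  obtain ⟨b', q, hq, hqs⟩ := exists_path_of_pendant (c := c) (d := d) p hp ((hmem d).2 (by simp))
    ((hmem c).2 (by simp)) hdc.symm (by
      intro w hw hdw
      rcases (hmem w).1 hw with rfl | rfl | hwC
      · exact absurd rfl hdw.ne
      · rfl
      · exact absurd (hbr.sep.closed w hwC d hdS hdc hdw.symm) hdC)
  have hqs' : ∀ x, x ∈ q.support ↔ x = c ∨ x ∈ C := by
    intro x
    rw [hqs, hmem]
    constructor
    · rintro ⟨rfl | h, hxd⟩
      · exact absurd rfl hxd
      · exact h
    · intro h
      refine ⟨.inr h, ?_⟩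
      rintro rfl
      exact h.elim hdc hdC
  have hL' : HasTree G (S \ C) (insert c L) := by
    obtain ⟨T, h1, h2, h3, h4, h5⟩ := hL
    exact ⟨T, h1, h2, h3, h4, fun v hv hs => .inr (h5 v hv hs)⟩
  have htree := hL'.attach_path q hq hcS ⟨c, hcS, y, ⟨hyS, hyC⟩, hyc.symm⟩
    (fun x hx hxS => ((hqs' x).1 hx).resolve_right hxS.2)
  have hunion : S \ C ∪ {x | x ∈ q.support} = S := by
    ext x
    simp only [Set.mem_union, Set.mem_sdiff, Set.mem_ofPred_eq, hqs']
    constructor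
    · rintro (h | rfl | h)
      · exact h.1
      · exact hbr.mem
      · exact hbr.sep.sub h
    · intro h
      by_cases hx : x ∈ C
      · exact .inr (.inr hx)
      · exact .inl ⟨h, hx⟩
  rw [hunion] at htree
  refine ⟨_, htree, (Set.ncard_insert_le _ _).trans ?_⟩
  omega

/-- A spanning tree has a leaf in every end, and the ends are disjoint. -/
theorem ncard_ends_le_ncard_leaves [Finite V] {T : SimpleGraph V} (hT : T.IsTree) (hTG : T ≤ G) :
    {E | IsEnd G Set.univ E}.ncard ≤ {v | (T.neighborSet v).ncard = 1}.ncard := by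
  have hex : ∀ E, IsEnd G Set.univ E → ∃ v ∈ E, (T.neighborSet v).ncard = 1 := by
    rintro E ⟨⟨c, hc⟩, -⟩
    exact hc.exists_leaf hT hTG
  have := hT.connected.nonempty
  choose! f hfE hf using hex
  refine Set.ncard_le_ncard_of_injOn f hf ?_ (Set.toFinite _)
  intro E hE F hF hEF
  exact hE.eq_of_mem hF (hfE E hE) (hEF ▸ hfE F hF)

end Induction

end BCLeaves


/-- if a class of finite graphs closed under induced subgraphs is such that
every connected member whose block-cutpoint tree is a path has a Hamiltonian path, then every
connected member whose block-cutpoint tree has exactly ℓ ≥ 2 leaves has a spanning tree with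
exactly ℓ leaves. -/
theorem stmt_18
    (ClassG : ∀ V : Type u, SimpleGraph V → Prop)
    (hclosed : ∀ (V : Type u) (G : SimpleGraph V) (S : Set V),
      ClassG V G → ClassG ↥S (G.induce S))
    (hHP : ∀ (V : Type u), ∀ _ : Fintype V, ∀ _ : DecidableEq V, ∀ G : SimpleGraph V,
      ClassG V G → G.Connected → InducesPath (bcGraph G) (Set.univ : Set (BCVert G)) →
        ∃ (a b : V) (p : G.Walk a b), p.IsHamiltonian)
    (l : ℕ) (hl : 2 ≤ l)
    (V : Type u) [Fintype V] (G : SimpleGraph V) (hG : ClassG V G) (hconn : G.Connected)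
    (hleaves : {x : BCVert G | ((bcGraph G).neighborSet x).ncard = 1}.ncard = l) :
    ∃ T' : SimpleGraph V, T' ≤ G ∧ T'.IsTree ∧
      {v : V | (T'.neighborSet v).ncard = 1}.ncard = l := by
  have hbase : ∀ S : Set V, S.Nonempty → BCLeaves.ConnIn G S →
      {E | BCLeaves.IsEnd G S E}.ncard ≤ 2 →
      ∃ (a b : V) (p : G.Walk a b), p.IsPath ∧ {x | x ∈ p.support} = S := by
    intro S hne hS he
    have hSconn : (G.induce S).Connected :=
      (connected_iff _).2 ⟨BCLeaves.connIn_iff.1 hS, hne.to_subtype⟩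
    let _ : DecidableEq S := Classical.decEq S
    obtain ⟨a, b, p, hp⟩ := hHP S (Fintype.ofFinite S) _ (G.induce S) (hclosed V G S hG) hSconn
      (BCLeaves.inducesPath_of_ends_le_two hSconn he)
    have hinj : Function.Injective (Embedding.induce (G := G) S).toHom :=
      Subtype.val_injective
    refine ⟨_, _, p.map (Embedding.induce S).toHom, hp.isPath.map hinj, ?_⟩
    ext x
    rw [Set.mem_ofPred_eq, Walk.support_map, List.mem_map]
    constructor
    · rintro ⟨y, -, rfl⟩
      exact y.2
    · exact fun hx => ⟨⟨x, hx⟩, hp.mem_support _, rfl⟩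
  rw [BCLeaves.ncard_leaves_eq hconn] at hleaves
  have := hconn.nonempty
  obtain ⟨L, ⟨T, hTG, hac, hreach, -, hleaf⟩, hcard⟩ := BCLeaves.exists_hasTree hbase l Set.univ
    Set.univ_nonempty (BCLeaves.connIn_univ hconn) hleaves
  have hT : T.IsTree :=
    ⟨@Connected.mk _ _ (fun u v => hreach u (Set.mem_univ u) v (Set.mem_univ v)) this, hac⟩
  refine ⟨T, hTG, hT, le_antisymm ?_ ?_⟩
  · rw [max_eq_right hl] at hcard
    refine (Set.ncard_le_ncard (fun v hv => ?_) (Set.toFinite L)).trans hcard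
    obtain ⟨w, hw⟩ := Set.ncard_eq_one.1 hv
    exact hleaf v (Set.mem_univ v) (hw ▸ Set.subsingleton_singleton)
  · rw [← hleaves]
    exact BCLeaves.ncard_ends_le_ncard_leaves hT hTG
end

section
/- Let G be a finite connected claw-free chordal graph (equivalently, a connected NC-path-tree graph) that has at least one cut-vertex, and let ℓ ≥ 2. Then the minimum, over all spanning trees of G, of the number of leaves equals ℓ if and only if the block-cutpoint tree BC(G) has exactly ℓ leaves. -/
/-!
Say that a leaf block is a block `B` containing exactly one cut-vertex `c` of `G`. Every cut-vertex
lies in two blocks, so the leaves of the block-cutpoint tree are exactly the leaf blocks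
(`ncard_bc_leaves`). It remains to see that the minimum number of leaves of a spanning tree is the
number of leaf blocks.

*Lower bound* (`ncard_leafBlock_le`). A block contains all neighbours of its vertices that are not
cut-vertices, so a spanning tree can enter `B \ {c}` only through `c`, and a longest tree path from
`c` into `B \ {c}` ends in a leaf. The sets `B \ {c}` are pairwise disjoint, so different leaf blocks
give different leaves.

*Upper bound* (`exists_tree_le`). By Dirac's theorem each `B \ {c}` contains a simplicial vertex of
`G`; let `S` collect one of them for each leaf block. Each component of `G - v`, `v` a cut-vertex,
contains some `B \ {c}` (`exists_leafBlock`), so `S` has, for every vertex `v`, an element in each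
component of `G - v`. A connected chordal claw-free graph with such a set `S` of simplicial vertices
has a spanning tree all of whose leaves are in `S` (`exists_goodTree`). This is shown by induction,
removing a simplicial vertex `s`:

* If `s ∉ S`, the tree of `G - s` has to be extended with `s` as an inner vertex, that is, it should
  be possible to choose it with an edge between two neighbours of `s`, which `s` then subdivides
  (`exists_goodTree_insert`). In a claw-free graph the neighbours of `x ∈ N(s)` outside `N[s]` form a
  clique. Hence a vertex of `N(s)` without tree neighbours in `N(s)` can be deleted from the tree
  without creating new leaves (`GoodTree.bypass`) and be put back into a tree edge between two of its
  neighbours (`GoodTree.relocate`). A few such moves produce the required edge.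
* If `s ∈ S` and all simplicial vertices are in `S`, then `s` is attached as a leaf. Where
  `S \ {s}` misses a component of some `G - s - v`, a smallest missed component contains a vertex
  `s'` that is simplicial in `G - s`; since `s'` is not in `S`, it is adjacent to `s`. The tree is
  then built for `G - s` and `(S \ {s}) ∪ {s'}`, and `s` is attached to `s'`.
-/

open SimpleGraph

/-! ### Connectivity inside a vertex set -/

/-- `Conn G A a b`: some walk of `G` from `a` to `b` stays inside `A`. The trivial walk is allowed
even when `a ∉ A`. -/
def Conn {V : Type*} (G : SimpleGraph V) (A : Set V) (a b : V) : Prop :=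
  Relation.ReflTransGen (fun x y => G.Adj x y ∧ x ∈ A ∧ y ∈ A) a b

namespace Conn

variable {V : Type*} {G : SimpleGraph V} {A B : Set V} {a b c v : V}

lemma refl (a : V) : Conn G A a a := Relation.ReflTransGen.refl

lemma trans (h : Conn G A a b) (h' : Conn G A b c) : Conn G A a c :=
  Relation.ReflTransGen.trans h h'

lemma symm (h : Conn G A a b) : Conn G A b a := by
  induction h with
  | refl => exact refl _
  | tail _ h ih => exact Relation.ReflTransGen.head ⟨h.1.symm, h.2.2, h.2.1⟩ ih

lemma single (h : G.Adj a b) (ha : a ∈ A) (hb : b ∈ A) : Conn G A a b :=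
  Relation.ReflTransGen.single ⟨h, ha, hb⟩

lemma mono (hAB : A ⊆ B) (h : Conn G A a b) : Conn G B a b :=
  Relation.ReflTransGen.mono (p := fun x y => G.Adj x y ∧ x ∈ B ∧ y ∈ B)
    (fun _ _ h => ⟨h.1, hAB h.2.1, hAB h.2.2⟩) _ _ h

lemma mem (h : Conn G A a b) (ha : a ∈ A) : b ∈ A := by
  induction h with
  | refl => exact ha
  | tail _ h _ => exact h.2.2

/-- A walk stays inside any set that contains the whole component of its starting point. -/
lemma restrict (h : Conn G A a b) (hC : ∀ w, Conn G A a w → w ∈ B) : Conn G B a b := by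
  induction h with
  | refl => exact refl _
  | tail h1 h2 ih =>
    exact ih.trans (single h2.1 (hC _ h1) (hC _ (Relation.ReflTransGen.tail h1 h2)))

/-- A set closed under taking neighbours inside `A` absorbs walks inside `A`. -/
lemma closed (h : Conn G A a b) (ha : a ∈ B) (hC : ∀ x ∈ B, ∀ y ∈ A, G.Adj x y → y ∈ B) :
    b ∈ B := by
  induction h with
  | refl => exact ha
  | tail _ h ih => exact hC _ ih _ h.2.2 h.1

/-- A walk ending at `v` can be stopped just before its first visit of `v`. -/
lemma firstHit (h : Conn G A a v) (hav : a ≠ v) :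
    ∃ t ∈ A, t ≠ v ∧ G.Adj t v ∧ Conn G (A \ {v}) a t := by
  induction h using Relation.ReflTransGen.head_induction_on with
  | refl => exact absurd rfl hav
  | @head x y h1 h2 ih =>
    by_cases hy : y = v
    · subst hy
      exact ⟨x, h1.2.1, hav, h1.1, refl _⟩
    · obtain ⟨t, h3, h4, h5, h6⟩ := ih hy
      exact ⟨t, h3, h4, h5, Conn.trans (Conn.single h1.1 ⟨h1.2.1, hav⟩ ⟨h1.2.2, hy⟩) h6⟩

/-- Walks can be rerouted around a vertex whose neighbours form a clique. -/
lemma avoid {s : V} (hs : ∀ x ∈ A, ∀ y ∈ A, G.Adj s x → G.Adj s y → x ≠ y → G.Adj x y)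
    (h : Conn G A a b) (ha : a ≠ s) :
    (b ≠ s → Conn G (A \ {s}) a b) ∧
      (b = s → ∃ y ∈ A, y ≠ s ∧ G.Adj y s ∧ Conn G (A \ {s}) a y) := by
  induction h with
  | refl => exact ⟨fun _ => refl _, fun h => absurd h ha⟩
  | @tail x y h1 h2 ih =>
    refine ⟨fun hy => ?_, ?_⟩
    · by_cases hx : x = s
      · obtain ⟨z, hz, hzs, hza, hzc⟩ := ih.2 hx
        subst hx
        by_cases hzy : z = y
        · exact hzy ▸ hzc
        · exact Conn.trans hzc (Conn.single (hs z hz y h2.2.2 hza.symm h2.1 hzy) ⟨hz, hzs⟩ ⟨h2.2.2, hy⟩)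
      · exact (ih.1 hx).trans (single h2.1 ⟨h2.2.1, hx⟩ ⟨h2.2.2, hy⟩)
    · rintro rfl
      exact ⟨x, h2.2.1, h2.1.ne, h2.1, ih.1 h2.1.ne⟩

lemma of_induce (h : (G.induce A).Preconnected) (ha : a ∈ A) (hb : b ∈ A) : Conn G A a b := by
  have := (reachable_iff_reflTransGen _ _).1 (h ⟨a, ha⟩ ⟨b, hb⟩)
  exact Relation.ReflTransGen.lift (p := fun x y => G.Adj x y ∧ x ∈ A ∧ y ∈ A)
    (fun x : A => (x : V)) (fun x y hxy => ⟨hxy, x.2, y.2⟩) _ _ this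

lemma to_induce (h : ∀ a ∈ A, ∀ b ∈ A, Conn G A a b) : (G.induce A).Preconnected := by
  rintro ⟨a, ha⟩ ⟨b, hb⟩
  have key : ∀ c, Conn G A a c → ∀ hc : c ∈ A, (G.induce A).Reachable ⟨a, ha⟩ ⟨c, hc⟩ := by
    intro c hc
    induction hc with
    | refl => exact fun _ => Reachable.refl _
    | tail h1 h2 ih =>
      exact fun hc => (ih h2.2.1).trans (Adj.reachable (by simpa using h2.1))
  exact key b (h a ha b hb) hb

lemma preconnected_iff :
    (G.induce A).Preconnected ↔ ∀ a ∈ A, ∀ b ∈ A, Conn G A a b :=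
  ⟨fun h _ ha _ hb => of_induce h ha hb, to_induce⟩

end Conn

/-! ### Chordality and claw-freeness in elementary form -/

/-- In a chordal graph, two neighbours of `v` joined by a walk through non-neighbours of `v` are
adjacent. -/
def ChordProp {V : Type*} (G : SimpleGraph V) : Prop :=
  ∀ (v a b u z : V) (X : Set V), G.Adj v a → G.Adj v b → a ≠ b →
    (∀ w ∈ X, w ≠ v ∧ ¬ G.Adj v w) → u ∈ X → z ∈ X → G.Adj a u → G.Adj z b →
    Conn G X u z → G.Adj a b

/-- Otherwise a shortest walk from `a` to `b` through `X` closes up with `v` to an induced cycle. -/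
lemma chordProp_of_chordal {V : Type*} {G : SimpleGraph V} (hG : Chordal G) : ChordProp G := by
  intro v a b u z X hva hvb hab hX hu hz hau hzb huz
  by_contra hnab
  let Y : Set V := insert a (insert b X)
  let H : SimpleGraph V :=
    { Adj := fun x y => G.Adj x y ∧ x ∈ Y ∧ y ∈ Y
      symm := ⟨fun x y h => ⟨h.1.symm, h.2.2, h.2.1⟩⟩
      loopless := ⟨fun x h => G.loopless.irrefl x h.1⟩ }
  have hXY : X ⊆ Y := fun w hw => Or.inr (Or.inr hw)
  have haY : a ∈ Y := Or.inl rfl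
  have hbY : b ∈ Y := Or.inr (Or.inl rfl)
  have hreach : H.Reachable a b := by
    rw [reachable_iff_reflTransGen]
    exact ((Conn.single hau haY (hXY hu)).trans (huz.mono hXY)).trans
      (Conn.single hzb (hXY hz) hbY)
  obtain ⟨w, hwp, hwl⟩ := hreach.exists_path_of_dist
  have hnil : ¬ w.Nil := Walk.not_nil_of_ne hab
  have hYall : ∀ i, w.getVert i ∈ Y := by
    intro i
    by_cases hi : i < w.length
    · exact (w.adj_getVert_succ hi).2.1
    · rw [w.getVert_of_length_le (by omega)]; exact hbY
  have hinj : ∀ i j, i ≤ w.length → j ≤ w.length → w.getVert i = w.getVert j → i = j :=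
    fun i j hi hj h => hwp.getVert_injOn hi hj h
  have hshort : ∀ i j, i < j → j ≤ w.length → G.Adj (w.getVert i) (w.getVert j) → j = i + 1 := by
    intro i j hij hj hadj
    have hadj' : H.Adj (w.getVert i) (w.getVert j) := ⟨hadj, hYall i, hYall j⟩
    have := dist_le (((w.take i).concat hadj').append (w.drop j))
    rw [← hwl] at this
    simp only [Walk.length_append, Walk.length_concat, Walk.take_length, Walk.drop_length] at this
    omega
  have hk : 2 ≤ w.length := by
    rcases Nat.lt_or_ge w.length 2 with h | h
    · exfalso
      have h0 : 0 < w.length := Nat.pos_of_ne_zero (fun h0 => hab (Walk.eq_of_length_eq_zero h0))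
      have h1 : w.length = 1 := by omega
      have := (w.adj_getVert_succ h0).1
      rw [w.getVert_zero, show (0 + 1) = w.length by omega, w.getVert_length] at this
      exact hnab this
    · exact h
  have hv : ∀ i ≤ w.length, (G.Adj v (w.getVert i) ↔ i = 0 ∨ i = w.length) := by
    intro i hi
    constructor
    · intro h
      rcases hYall i with h1 | h1 | h1
      · left; exact hinj _ _ hi (Nat.zero_le _) (by rw [h1, w.getVert_zero])
      · right; exact hinj _ _ hi le_rfl (by rw [h1, w.getVert_length])
      · exact absurd h (hX _ h1).2
    · rintro (rfl | rfl)
      · rwa [w.getVert_zero]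
      · rwa [w.getVert_length]
  have hvne : ∀ i, w.getVert i ≠ v := by
    intro i h
    rcases hYall i with h1 | h1 | h1
    · exact hva.ne (h ▸ h1)
    · exact hvb.ne (h ▸ h1)
    · exact (hX _ h1).1 h
  let f : Fin (w.length + 2) → V := fun i => if i.val ≤ w.length then w.getVert i.val else v
  have hf : Function.Injective f := by
    intro i j hij
    simp only [f] at hij
    have hi := i.2
    have hj := j.2
    apply Fin.ext
    split_ifs at hij with h1 h2 h2
    · exact hinj _ _ h1 h2 hij
    · exact absurd hij (hvne _)
    · exact absurd hij.symm (hvne _)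
    · omega
  have hlt : ∀ i j : Fin (w.length + 2), i < j →
      (G.Adj (f i) (f j) ↔ (cycleGraph (w.length + 2)).Adj i j) := by
    intro i j hij
    have hi := i.2
    have hj := j.2
    have hij' : i.val < j.val := hij
    rw [cycleGraph_adj', Fin.coe_sub_iff_lt.2 hij, Fin.coe_sub_iff_le.2 hij.le]
    have h1 : i.val ≤ w.length := by omega
    simp only [f, h1, if_true]
    by_cases h2 : j.val ≤ w.length
    · rw [if_pos h2]
      constructor
      · intro h; have := hshort _ _ hij' h2 h; omega
      · intro h
        have h3 : j.val = i.val + 1 := by omega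
        rw [h3]
        exact (w.adj_getVert_succ (by omega)).1
    · rw [if_neg h2, G.adj_comm, hv _ h1]
      omega
  refine hG (w.length + 2) (by omega) ⟨⟨⟨f, hf⟩, ?_⟩⟩
  intro i j
  simp only [Function.Embedding.coeFn_mk]
  rcases lt_trichotomy i j with h | h | h
  · exact hlt i j h
  · subst h; simp
  · rw [G.adj_comm, (cycleGraph (w.length + 2)).adj_comm]; exact hlt j i h

/-- Among three distinct neighbours of a vertex, two are adjacent. -/
def ClawProp {V : Type*} (G : SimpleGraph V) : Prop :=
  ∀ c x y z : V, G.Adj c x → G.Adj c y → G.Adj c z → x ≠ y → x ≠ z → y ≠ z →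
    G.Adj x y ∨ G.Adj x z ∨ G.Adj y z

lemma clawProp_of_clawFree {V : Type*} {G : SimpleGraph V} (hG : ClawFree G) : ClawProp G := by
  intro c x y z hx hy hz hxy hxz hyz
  by_contra! h
  obtain ⟨h1, h2, h3⟩ := h
  have e1 : ¬ G.Adj y x := fun h => h1 h.symm
  have e2 : ¬ G.Adj z x := fun h => h2 h.symm
  have e3 : ¬ G.Adj z y := fun h => h3 h.symm
  refine hG ⟨⟨⟨![c, x, y, z], ?_⟩, ?_⟩⟩
  · intro i j hij
    have a1 := hx.ne
    have a2 := hy.ne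
    have a3 := hz.ne
    fin_cases i <;> fin_cases j <;> simp_all
  · intro i j
    change G.Adj (![c, x, y, z] i) (![c, x, y, z] j) ↔ claw.Adj i j
    fin_cases i <;> fin_cases j <;>
      simp [claw, hx, hy, hz, hx.symm, hy.symm, hz.symm, h1, h2, h3, e1, e2, e3]

/-! ### Simplicial vertices -/

/-- `s` is a simplicial vertex of the subgraph induced by `A`: its neighbours in `A` form a
clique. -/
def Simp {V : Type*} (G : SimpleGraph V) (A : Set V) (s : V) : Prop :=
  s ∈ A ∧ ∀ x ∈ A, ∀ y ∈ A, G.Adj s x → G.Adj s y → x ≠ y → G.Adj x y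

lemma Simp.mono {V : Type*} {G : SimpleGraph V} {A B : Set V} {s : V} (h : Simp G A s)
    (hB : B ⊆ A) (hs : s ∈ B) : Simp G B s :=
  ⟨hs, fun x hx y hy => h.2 x (hB hx) y (hB hy)⟩

/-- Dirac's theorem, in the form that a clique missing some vertex of a chordal graph misses some
simplicial vertex. If `v` is not adjacent to everything, the neighbourhood of a component of the
non-neighbours of `v` is a clique, to which induction applies. -/
lemma exists_simplicial {V : Type*} [Finite V] {G : SimpleGraph V} (hC : ChordProp G) :
    ∀ (n : ℕ) (A K : Set V), A.ncard = n → K ⊆ A → K ≠ A →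
      (∀ x ∈ K, ∀ y ∈ K, x ≠ y → G.Adj x y) → ∃ s ∈ A, s ∉ K ∧ Simp G A s := by
  intro n
  induction n using Nat.strong_induction_on with
  | _ n ih =>
  intro A K hn hKA hne hK
  obtain ⟨a, haA, haK⟩ := Set.exists_of_ssubset (hKA.ssubset_of_ne hne)
  by_cases hcomp : ∀ x ∈ A, ∀ y ∈ A, x ≠ y → G.Adj x y
  · exact ⟨a, haA, haK, haA, fun x hx y hy _ _ hxy => hcomp x hx y hy hxy⟩
  obtain ⟨v, hvA, hvK⟩ : ∃ v ∈ A, ∀ w ∈ K, w ≠ v → G.Adj v w := by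
    rcases K.eq_empty_or_nonempty with h | ⟨v, hv⟩
    · exact ⟨a, haA, by simp [h]⟩
    · exact ⟨v, hKA hv, fun w hw hwv => hK v hv w hw hwv.symm⟩
  by_cases huniv : ∀ w ∈ A, w ≠ v → G.Adj v w
  · have hlt : (A \ {v}).ncard < n := hn ▸ Set.ncard_sdiff_singleton_lt_of_mem hvA
    have hne' : K \ {v} ≠ A \ {v} := by
      intro h
      apply hcomp
      intro x hx y hy hxy
      by_cases hxv : x = v
      · exact hxv ▸ huniv y hy (fun h => hxy (hxv.trans h.symm))
      by_cases hyv : y = v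
      · exact hyv ▸ (huniv x hx hxv).symm
      have hx' : x ∈ K \ {v} := h ▸ ⟨hx, hxv⟩
      have hy' : y ∈ K \ {v} := h ▸ ⟨hy, hyv⟩
      exact hK x hx'.1 y hy'.1 hxy
    obtain ⟨s, hsA, hsK, hs⟩ := ih _ hlt (A \ {v}) (K \ {v}) rfl
      (Set.sdiff_subset_sdiff_left hKA) hne' (fun x hx y hy => hK x hx.1 y hy.1)
    refine ⟨s, hsA.1, fun h => hsK ⟨h, hsA.2⟩, hsA.1, fun x hx y hy hsx hsy hxy => ?_⟩
    by_cases hxv : x = v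
    · exact hxv ▸ huniv y hy (fun h => hxy (hxv.trans h.symm))
    by_cases hyv : y = v
    · exact hyv ▸ (huniv x hx hxv).symm
    exact hs.2 x ⟨hx, hxv⟩ y ⟨hy, hyv⟩ hsx hsy hxy
  · push Not at huniv
    obtain ⟨d, hdA, hdv, hvd⟩ := huniv
    set M : Set V := {w | w ∈ A ∧ w ≠ v ∧ ¬ G.Adj v w} with hM
    have hdM : d ∈ M := ⟨hdA, hdv, hvd⟩
    set D : Set V := {w | Conn G M d w} with hD
    have hDM : D ⊆ M := fun w hw => hw.mem hdM
    set N : Set V := {w | w ∈ A ∧ G.Adj v w ∧ ∃ t ∈ D, G.Adj t w} with hN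
    have hsub : D ∪ N ⊆ A := by
      rintro w (hw | hw)
      · exact (hDM hw).1
      · exact hw.1
    have hvn : v ∉ D ∪ N := by
      rintro (hw | hw)
      · exact (hDM hw).2.1 rfl
      · exact G.loopless.irrefl v hw.2.1
    have hlt : (D ∪ N).ncard < n :=
      hn ▸ Set.ncard_lt_ncard (hsub.ssubset_of_ne (fun h => hvn (h ▸ hvA)))
    obtain ⟨s, hs, hsN, hss⟩ := ih _ hlt (D ∪ N) N rfl Set.subset_union_right
      (fun h => hvd ((h ▸ (Or.inl (Conn.refl d) : d ∈ D ∪ N) : d ∈ N)).2.1)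
      (by
        rintro x ⟨_, hvx, t, ht, htx⟩ y ⟨_, hvy, u, hu, huy⟩ hxy
        exact hC v x y t u M hvx hvy hxy (fun w hw => hw.2) (hDM ht) (hDM hu) htx.symm huy
          (ht.symm.trans hu))
    have hsD : s ∈ D := hs.resolve_right hsN
    have hnb : ∀ x ∈ A, G.Adj s x → x ∈ D ∪ N := by
      intro x hx hsx
      by_cases hvx : G.Adj v x
      · exact Or.inr ⟨hx, hvx, s, hsD, hsx⟩
      · have hxv : x ≠ v := fun h => (hDM hsD).2.2 (h ▸ hsx.symm)
        exact Or.inl (Conn.trans hsD (Conn.single hsx (hDM hsD) ⟨hx, hxv, hvx⟩))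
    refine ⟨s, hsub hs, fun h => ?_, hsub hs, fun x hx y hy hsx hsy =>
      hss.2 x (hnb x hx hsx) y (hnb y hy hsy) hsx hsy⟩
    exact (hDM hsD).2.2 (hvK s h (hDM hsD).2.1)

/-- A set attached to the rest of `A` through a single vertex contains a simplicial vertex. -/
lemma exists_simplicial_of_closed {V : Type*} [Finite V] {G : SimpleGraph V} (hC : ChordProp G)
    {A E : Set V} {v : V} (hEA : E ⊆ A) (hE : E.Nonempty) (hv : v ∉ E)
    (hcl : ∀ x ∈ E, ∀ y ∈ A, G.Adj x y → y ∈ E ∨ y = v) : ∃ s ∈ E, Simp G A s := by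
  obtain ⟨e, he⟩ := hE
  obtain ⟨s, hs, hsv, hss⟩ := exists_simplicial hC _ (insert v E) {v} rfl (by simp)
    (fun h => hv (by
      have : e ∈ ({v} : Set V) := h ▸ Or.inr he
      exact (Set.mem_singleton_iff.1 this) ▸ he))
    (by rintro x rfl y rfl h; exact absurd rfl h)
  have hsE : s ∈ E := hs.resolve_left hsv
  refine ⟨s, hsE, hEA hsE, fun x hx y hy hsx hsy => ?_⟩
  exact hss.2 x (Or.symm (hcl s hsE x hx hsx)) y (Or.symm (hcl s hsE y hy hsy)) hsx hsy

/-- An edge `xp` that closes up with a walk through `D` spans a triangle with a vertex of `D`: the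
last neighbour of `x` on the walk is adjacent to `p` by chordality. -/
lemma exists_common_neighbor {V : Type*} {G : SimpleGraph V} (hC : ChordProp G)
    {D : Set V} {x p y z : V} (hxp : G.Adj x p) (hxD : x ∉ D) (hpD : p ∉ D) (hy : y ∈ D)
    (hxy : G.Adj x y) (h : Conn G D y z) (hzp : G.Adj z p) :
    ∃ q ∈ D, G.Adj q x ∧ G.Adj q p := by
  by_contra hno
  push Not at hno
  have hz : z ∈ D := h.mem hy
  have key : ∀ u, Conn G D u z →
      u ∈ D → ¬ G.Adj x u ∧ Conn G {w | w ∈ D ∧ ¬ G.Adj x w} u z := by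
    intro u hu
    induction hu using Relation.ReflTransGen.head_induction_on with
    | refl => exact fun hz => ⟨fun h => hno z hz h.symm hzp, Conn.refl _⟩
    | @head u u' h1 h2 ih =>
      intro hu
      obtain ⟨h3, h4⟩ := ih h1.2.2
      have hu' : u' ∈ {w | w ∈ D ∧ ¬ G.Adj x w} := ⟨h1.2.2, h3⟩
      have hxu : ¬ G.Adj x u := by
        intro hxu
        refine hno u hu hxu.symm (hC x u p u' z _ hxu hxp ?_ ?_ hu' (h4.mem hu') h1.1 hzp h4)
        · rintro rfl; exact hpD hu
        · rintro w hw
          exact ⟨fun h => hxD (h ▸ hw.1), hw.2⟩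
      exact ⟨hxu, Conn.trans (Conn.single h1.1 ⟨hu, hxu⟩ hu') h4⟩
  exact (key y h hy).1 hxy

/-! ### Spanning trees as edge sets -/

/-- Reachability along the edges of `T`. -/
def TreeReach {V : Type*} (T : Set (Sym2 V)) (a b : V) : Prop :=
  Relation.ReflTransGen (fun x y => s(x, y) ∈ T) a b

namespace TreeReach

variable {V : Type*} {T T' : Set (Sym2 V)} {a b c : V}

lemma refl (a : V) : TreeReach T a a := Relation.ReflTransGen.refl

lemma trans (h : TreeReach T a b) (h' : TreeReach T b c) : TreeReach T a c :=
  Relation.ReflTransGen.trans h h'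

lemma single (h : s(a, b) ∈ T) : TreeReach T a b := Relation.ReflTransGen.single h

lemma symm (h : TreeReach T a b) : TreeReach T b a := by
  induction h with
  | refl => exact refl _
  | tail _ h ih => exact trans (single (Sym2.eq_swap ▸ h)) ih

lemma map (f : V → V) (hf : ∀ x y, s(x, y) ∈ T → TreeReach T' (f x) (f y))
    (h : TreeReach T a b) : TreeReach T' (f a) (f b) := by
  induction h with
  | refl => exact refl _
  | tail _ h ih => exact ih.trans (hf _ _ h)

end TreeReach

/-- `T` is the edge set of a spanning tree of `G[A]` all of whose leaves lie in `S`. Being a tree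
is encoded by connectedness together with the bound on the number of edges. -/
structure GoodTree {V : Type*} (G : SimpleGraph V) (A S : Set V) (T : Set (Sym2 V)) : Prop where
  sub : ∀ x y, s(x, y) ∈ T → G.Adj x y ∧ x ∈ A ∧ y ∈ A
  conn : ∀ a ∈ A, ∀ b ∈ A, TreeReach T a b
  card : T.ncard + 1 ≤ A.ncard
  deg : ∀ v ∈ A, v ∉ S → ∃ y z, y ≠ z ∧ s(v, y) ∈ T ∧ s(v, z) ∈ T

/-- A connected graph on `A` has at least `|A| - 1` edges. -/
lemma card_le_of_treeReach {V : Type*} [Finite V] {A : Set V} {T : Set (Sym2 V)}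
    (hA : A.Nonempty) (sub : ∀ x y, s(x, y) ∈ T → x ∈ A ∧ y ∈ A)
    (conn : ∀ a ∈ A, ∀ b ∈ A, TreeReach T a b) : A.ncard ≤ T.ncard + 1 := by
  let H : SimpleGraph A :=
    { Adj := fun x y => x ≠ y ∧ s((x : V), (y : V)) ∈ T
      symm := ⟨fun x y h => ⟨h.1.symm, Sym2.eq_swap ▸ h.2⟩⟩
      loopless := ⟨fun x h => h.1 rfl⟩ }
  have key : ∀ a b, TreeReach T a b → ∀ (ha : a ∈ A) (hb : b ∈ A), H.Reachable ⟨a, ha⟩ ⟨b, hb⟩ := by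
    intro a b h
    induction h with
    | refl => exact fun _ _ => Reachable.refl _
    | @tail x y h1 h2 ih =>
      intro ha hb
      have hx := (sub _ _ h2).1
      refine (ih ha hx).trans ?_
      by_cases hxy : x = y
      · subst hxy; exact Reachable.refl _
      · exact Adj.reachable
          (show H.Adj ⟨x, hx⟩ ⟨y, hb⟩ from ⟨fun h => hxy (congrArg Subtype.val h), h2⟩)
  obtain ⟨a, ha⟩ := hA
  have hconn : H.Connected :=
    { preconnected := fun x y => key _ _ (conn x x.2 y y.2) x.2 y.2
      nonempty := ⟨⟨a, ha⟩⟩ }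
  have h1 := hconn.card_vert_le_card_edgeSet_add_one
  have h2 : Nat.card H.edgeSet ≤ T.ncard := by
    rw [← Nat.card_coe_set_eq]
    refine Nat.card_le_card_of_injective
      (fun e : H.edgeSet => (⟨Sym2.map Subtype.val e.1, ?_⟩ : T)) ?_
    · obtain ⟨e, he⟩ := e
      induction e using Sym2.ind with
      | _ x y => exact (show H.Adj x y from he).2
    · intro e f hef
      exact Subtype.ext (Sym2.map.injective Subtype.val_injective (congrArg Subtype.val hef))
  rw [Nat.card_coe_set_eq] at h1
  omega

namespace GoodTree

variable {V : Type*} {G : SimpleGraph V} {A S : Set V} {T : Set (Sym2 V)}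

lemma swap {x y : V} (h : s(x, y) ∈ T) : s(y, x) ∈ T := Sym2.eq_swap ▸ h

lemma exists_edge (h : GoodTree G A S T) {x b : V} (hx : x ∈ A) (hb : b ∈ A) (hbx : b ≠ x) :
    ∃ y, s(x, y) ∈ T := by
  rcases Relation.ReflTransGen.cases_head (h.conn x hx b hb) with h | ⟨y, hy, _⟩
  · exact absurd h.symm hbx
  · exact ⟨y, hy⟩

variable [Finite V]

lemma no_triangle (h : GoodTree G A S T) {x y z : V} (hxy : s(x, y) ∈ T) (hxz : s(x, z) ∈ T)
    (hyz : s(y, z) ∈ T) : False := by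
  have nxy := (h.sub _ _ hxy).1.ne
  have nxz := (h.sub _ _ hxz).1.ne
  have nyz := (h.sub _ _ hyz).1.ne
  have h1 : s(x, y) ∈ T \ {s(y, z)} := ⟨hxy, by simp [nxy, nxz]⟩
  have h2 : s(x, z) ∈ T \ {s(y, z)} := ⟨hxz, by simp [nxy, nxz]⟩
  have hyz' : TreeReach (T \ {s(y, z)}) y z :=
    (TreeReach.single (swap h1)).trans (TreeReach.single h2)
  have := card_le_of_treeReach (T := T \ {s(y, z)}) ⟨x, (h.sub _ _ hxy).2.1⟩
    (fun a b hab => (h.sub a b hab.1).2)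
    (fun a ha b hb => (h.conn a ha b hb).map id (fun u v huv => by
      by_cases he : s(u, v) = s(y, z)
      · rcases Sym2.eq_iff.1 he with ⟨rfl, rfl⟩ | ⟨rfl, rfl⟩
        · exact hyz'
        · exact hyz'.symm
      · exact TreeReach.single ⟨huv, he⟩))
  have h3 := Set.ncard_sdiff_singleton_add_one hyz
  have := h.card
  omega

/-- Attaching a new leaf `s ∈ S` to `x`, which then need not be an allowed leaf any more. -/
lemma addLeaf {S' : Set V} {s x : V} (h : GoodTree G A S' T) (hs : s ∉ A) (hx : x ∈ A)
    (hsx : G.Adj s x) (hsS : s ∈ S)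
    (hS : ∀ v ∈ A, v ∈ S' → v ∉ S → v = x ∧ ∃ b ∈ A, b ≠ x) :
    GoodTree G (insert s A) S (insert s(s, x) T) where
  sub := by
    rintro a b (hab | hab)
    · rcases Sym2.eq_iff.1 hab with ⟨rfl, rfl⟩ | ⟨rfl, rfl⟩
      · exact ⟨hsx, Or.inl rfl, Or.inr hx⟩
      · exact ⟨hsx.symm, Or.inr hx, Or.inl rfl⟩
    · have := h.sub a b hab
      exact ⟨this.1, Or.inr this.2.1, Or.inr this.2.2⟩
  conn := by
    have key : ∀ a ∈ insert s A, TreeReach (insert s(s, x) T) a x := by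
      rintro a (rfl | ha)
      · exact TreeReach.single (Or.inl rfl)
      · exact (h.conn a ha x hx).map id (fun u v huv => TreeReach.single (Or.inr huv))
    exact fun a ha b hb => (key a ha).trans (key b hb).symm
  card := by
    have := h.card
    rw [Set.ncard_insert_of_notMem hs]
    have := Set.ncard_insert_le s(s, x) T
    omega
  deg := by
    rintro v (rfl | hv) hvS
    · exact absurd hsS hvS
    · by_cases hvS' : v ∈ S'
      · obtain ⟨rfl, b, hb, hbx⟩ := hS v hv hvS' hvS
        obtain ⟨y, hy⟩ := h.exists_edge hx hb hbx
        refine ⟨s, y, ?_, Or.inl Sym2.eq_swap, Or.inr hy⟩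
        rintro rfl
        exact hs (h.sub _ _ hy).2.2
      · obtain ⟨y, z, hyz, h1, h2⟩ := h.deg v hv hvS'
        exact ⟨y, z, hyz, Or.inr h1, Or.inr h2⟩

/-- Subdividing the tree edge `ab` by a new vertex `x`. -/
lemma subdivide {a b x : V} (h : GoodTree G A S T) (hab : s(a, b) ∈ T) (hx : x ∉ A)
    (hxa : G.Adj x a) (hxb : G.Adj x b) :
    GoodTree G (insert x A) S (insert s(x, a) (insert s(x, b) (T \ {s(a, b)}))) where
  sub := by
    have hA := h.sub a b hab
    rintro u v (huv | huv | huv)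
    · rcases Sym2.eq_iff.1 huv with ⟨rfl, rfl⟩ | ⟨rfl, rfl⟩
      · exact ⟨hxa, Or.inl rfl, Or.inr hA.2.1⟩
      · exact ⟨hxa.symm, Or.inr hA.2.1, Or.inl rfl⟩
    · rcases Sym2.eq_iff.1 huv with ⟨rfl, rfl⟩ | ⟨rfl, rfl⟩
      · exact ⟨hxb, Or.inl rfl, Or.inr hA.2.2⟩
      · exact ⟨hxb.symm, Or.inr hA.2.2, Or.inl rfl⟩
    · have := h.sub u v huv.1
      exact ⟨this.1, Or.inr this.2.1, Or.inr this.2.2⟩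
  conn := by
    have hA := h.sub a b hab
    set T' := insert s(x, a) (insert s(x, b) (T \ {s(a, b)}))
    have h1 : TreeReach T' x a := TreeReach.single (Or.inl rfl)
    have h2 : TreeReach T' x b := TreeReach.single (Or.inr (Or.inl rfl))
    have key : ∀ u ∈ insert x A, TreeReach T' u a := by
      rintro u (rfl | hu)
      · exact h1
      · refine (h.conn u hu a hA.2.1).map id (fun v w hvw => ?_)
        by_cases he : s(v, w) = s(a, b)
        · rcases Sym2.eq_iff.1 he with ⟨rfl, rfl⟩ | ⟨rfl, rfl⟩
          · exact h1.symm.trans h2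
          · exact h2.symm.trans h1
        · exact TreeReach.single (Or.inr (Or.inr ⟨hvw, he⟩))
    exact fun a ha b hb => (key a ha).trans (key b hb).symm
  card := by
    have := h.card
    rw [Set.ncard_insert_of_notMem hx]
    have := Set.ncard_insert_le s(x, a) (insert s(x, b) (T \ {s(a, b)}))
    have := Set.ncard_insert_le s(x, b) (T \ {s(a, b)})
    have := Set.ncard_sdiff_singleton_add_one hab
    omega
  deg := by
    classical
    have hA := h.sub a b hab
    rintro v (rfl | hv) hvS
    · exact ⟨a, b, hA.1.ne, Or.inl rfl, Or.inr (Or.inl rfl)⟩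
    · obtain ⟨y, z, hyz, h1, h2⟩ := h.deg v hv hvS
      -- a lost neighbour of `v` is replaced by `x`
      let f : V → V := fun w => if s(v, w) = s(a, b) then x else w
      have hf : ∀ w, s(v, w) ∈ T →
          s(v, f w) ∈ insert s(x, a) (insert s(x, b) (T \ {s(a, b)})) := by
        intro w hw
        by_cases he : s(v, w) = s(a, b)
        · simp only [f, he, if_true]
          rcases Sym2.eq_iff.1 he with ⟨rfl, rfl⟩ | ⟨rfl, rfl⟩
          · exact Or.inl Sym2.eq_swap
          · exact Or.inr (Or.inl Sym2.eq_swap)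
        · simp only [f, he, if_false]
          exact Or.inr (Or.inr ⟨hw, he⟩)
      refine ⟨f y, f z, ?_, hf y h1, hf z h2⟩
      simp only [f]
      split_ifs with hy hz hz
      · exact fun _ => hyz (Sym2.congr_right.1 (hy.trans hz.symm))
      · rintro rfl; exact hx (h.sub _ _ h2).2.2
      · rintro rfl; exact hx (h.sub _ _ h1).2.2
      · exact hyz

/-- Deleting an inner vertex `x` whose tree neighbours are pairwise adjacent in `G`. A third
neighbour `y₃` is first reattached to another neighbour `y₁`; a vertex with exactly two tree
neighbours is replaced by an edge between them. -/
lemma bypass {x : V} (hx : x ∈ A) : ∀ (n : ℕ) (T : Set (Sym2 V)), {y | s(x, y) ∈ T}.ncard = n →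
    GoodTree G A S T → (∃ y z, y ≠ z ∧ s(x, y) ∈ T ∧ s(x, z) ∈ T) →
    (∀ y z, s(x, y) ∈ T → s(x, z) ∈ T → y ≠ z → G.Adj y z) →
    ∃ T', GoodTree G (A \ {x}) S T' ∧ ∀ a b, s(a, b) ∈ T → a ≠ x → b ≠ x → s(a, b) ∈ T' := by
  classical
  intro n
  induction n using Nat.strong_induction_on with
  | _ n ih =>
  intro T hn h ⟨y, z, hyz, hxy, hxz⟩ hcl
  have hyzT : s(y, z) ∉ T := fun h' => h.no_triangle hxy hxz h'
  have nxy := (h.sub _ _ hxy).1.ne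
  have nxz := (h.sub _ _ hxz).1.ne
  have hyA := (h.sub _ _ hxy).2.2
  have hzA := (h.sub _ _ hxz).2.2
  have hGyz := hcl y z hxy hxz hyz
  by_cases h3 : ∃ w, s(x, w) ∈ T ∧ w ≠ y ∧ w ≠ z
  · obtain ⟨w, hxw, hwy, hwz⟩ := h3
    have nxw := (h.sub _ _ hxw).1.ne
    have hwA := (h.sub _ _ hxw).2.2
    have hGyw := hcl y w hxy hxw hwy.symm
    have hywT : s(y, w) ∉ T := fun h' => h.no_triangle hxy hxw h'
    set T1 : Set (Sym2 V) := insert s(y, w) (T \ {s(x, w)}) with hT1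
    have e1 : s(x, y) ∈ T1 := Or.inr ⟨hxy, by simp [hwy.symm, nxy.symm]⟩
    have e2 : s(x, z) ∈ T1 := Or.inr ⟨hxz, by simp [hwz.symm, nxz.symm]⟩
    have hnb : ∀ u, s(x, u) ∈ T1 → s(x, u) ∈ T ∧ u ≠ w := by
      rintro u (hu | hu)
      · rcases Sym2.eq_iff.1 hu with ⟨h', _⟩ | ⟨h', _⟩
        · exact absurd h' nxy
        · exact absurd h' nxw
      · exact ⟨hu.1, by rintro rfl; exact hu.2 rfl⟩
    have good1 : GoodTree G A S T1 :=
      { sub := by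
          rintro u v (huv | huv)
          · rcases Sym2.eq_iff.1 huv with ⟨rfl, rfl⟩ | ⟨rfl, rfl⟩
            · exact ⟨hGyw, hyA, hwA⟩
            · exact ⟨hGyw.symm, hwA, hyA⟩
          · exact h.sub u v huv.1
        conn := by
          intro a ha b hb
          refine (h.conn a ha b hb).map id (fun u v huv => ?_)
          have hxw' : TreeReach T1 x w := (TreeReach.single e1).trans (TreeReach.single (Or.inl rfl))
          by_cases he : s(u, v) = s(x, w)
          · rcases Sym2.eq_iff.1 he with ⟨rfl, rfl⟩ | ⟨rfl, rfl⟩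
            · exact hxw'
            · exact hxw'.symm
          · exact TreeReach.single (Or.inr ⟨huv, he⟩)
        card := by
          have := h.card
          rw [hT1]
          have := Set.ncard_insert_le s(y, w) (T \ {s(x, w)})
          have := Set.ncard_sdiff_singleton_add_one hxw
          omega
        deg := by
          intro v hv hvS
          by_cases hvx : v = x
          · subst hvx; exact ⟨y, z, hyz, e1, e2⟩
          obtain ⟨p, q, hpq, hp, hq⟩ := h.deg v hv hvS
          by_cases hvw : v = w
          · subst hvw
            have key : ∀ p q, p ≠ q → s(v, p) ∈ T → s(v, q) ∈ T → q ≠ x →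
                ∃ y z, y ≠ z ∧ s(v, y) ∈ T1 ∧ s(v, z) ∈ T1 := by
              intro p q hpq hp hq hqx
              refine ⟨y, q, ?_, Or.inl Sym2.eq_swap, Or.inr ⟨hq, by simp [hqx, Ne.symm nxw]⟩⟩
              rintro rfl
              exact hywT (swap hq)
            by_cases hqx : q = x
            · exact key q p hpq.symm hq hp (fun h' => hpq (h'.trans hqx.symm))
            · exact key p q hpq hp hq hqx
          · exact ⟨p, q, hpq, Or.inr ⟨hp, by simp [hvx, hvw]⟩, Or.inr ⟨hq, by simp [hvx, hvw]⟩⟩ }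
    have hlt : {u | s(x, u) ∈ T1}.ncard < n := by
      rw [← hn]
      exact Set.ncard_lt_ncard ⟨fun u hu => (hnb u hu).1, fun hh => (hnb w (hh hxw)).2 rfl⟩
    obtain ⟨T', hT', hkeep⟩ := ih _ hlt T1 rfl good1 ⟨y, z, hyz, e1, e2⟩
      (fun u v hu hv => hcl u v (hnb u hu).1 (hnb v hv).1)
    exact ⟨T', hT', fun a b hab ha hb => hkeep a b (Or.inr ⟨hab, by simp [ha, hb]⟩) ha hb⟩
  · push Not at h3
    have hnb : ∀ u, s(x, u) ∈ T → u = y ∨ u = z := fun u hu => or_iff_not_imp_left.2 (h3 u hu)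
    set T1 : Set (Sym2 V) := insert s(y, z) ((T \ {s(x, y)}) \ {s(x, z)}) with hT1
    have keep : ∀ a b, s(a, b) ∈ T → a ≠ x → b ≠ x → s(a, b) ∈ T1 :=
      fun a b hab ha hb => Or.inr ⟨⟨hab, by simp [ha, hb]⟩, by simp [ha, hb]⟩
    have hrem : ∀ u v, s(u, v) ∈ (T \ {s(x, y)}) \ {s(x, z)} → u ≠ x := by
      rintro u v huv rfl
      rcases hnb v huv.1.1 with rfl | rfl
      · exact huv.1.2 rfl
      · exact huv.2 rfl
    refine ⟨T1, ⟨?_, ?_, ?_, ?_⟩, keep⟩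
    · rintro u v (huv | huv)
      · rcases Sym2.eq_iff.1 huv with ⟨rfl, rfl⟩ | ⟨rfl, rfl⟩
        · exact ⟨hGyz, ⟨hyA, nxy.symm⟩, ⟨hzA, nxz.symm⟩⟩
        · exact ⟨hGyz.symm, ⟨hzA, nxz.symm⟩, ⟨hyA, nxy.symm⟩⟩
      · have := h.sub u v huv.1.1
        exact ⟨this.1, ⟨this.2.1, hrem u v huv⟩,
          ⟨this.2.2, hrem v u (by rwa [Sym2.eq_swap (a := u)] at huv)⟩⟩
    · have hyz1 : TreeReach T1 y z := TreeReach.single (Or.inl rfl)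
      let f : V → V := fun u => if u = x then y else u
      have hxf : ∀ v, s(x, v) ∈ T → TreeReach T1 y (f v) := by
        intro v hv
        rcases hnb v hv with rfl | rfl
        · simp only [f, nxy.symm, if_false]; exact TreeReach.refl _
        · simp only [f, nxz.symm, if_false]; exact hyz1
      intro a ha b hb
      have := (h.conn a ha.1 b hb.1).map (T' := T1) f (fun u v huv => by
        by_cases hu : u = x
        · subst hu
          have := hxf v huv
          simpa only [f, if_true] using this
        by_cases hv : v = x
        · subst hv
          have := (hxf u (swap huv)).symm
          simpa only [f, if_true] using this
        · simp only [f, hu, hv, if_false]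
          exact TreeReach.single (keep u v huv hu hv))
      simpa only [f, show a ≠ x from ha.2, show b ≠ x from hb.2, if_false] using this
    · have := h.card
      rw [hT1]
      have := Set.ncard_insert_le s(y, z) ((T \ {s(x, y)}) \ {s(x, z)})
      have := Set.ncard_sdiff_singleton_add_one hxy
      have := Set.ncard_sdiff_singleton_add_one
        (show s(x, z) ∈ T \ {s(x, y)} from ⟨hxz, by simp [hyz.symm, nxz.symm]⟩)
      have := Set.ncard_sdiff_singleton_add_one hx
      omega
    · rintro v ⟨hv, hvx⟩ hvS
      have hvx : v ≠ x := hvx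
      obtain ⟨p, q, hpq, hp, hq⟩ := h.deg v hv hvS
      have key : ∀ p q, p ≠ q → s(v, p) ∈ T → s(v, q) ∈ T → q ≠ x →
          ∃ y z, y ≠ z ∧ s(v, y) ∈ T1 ∧ s(v, z) ∈ T1 := by
        intro p q hpq hp hq hqx
        by_cases hpx : p = x
        · subst hpx
          rcases hnb v (swap hp) with rfl | rfl
          · exact ⟨z, q, by rintro rfl; exact hyzT hq, Or.inl rfl, keep _ _ hq hvx hqx⟩
          · exact ⟨y, q, by rintro rfl; exact hyzT (swap hq), Or.inl Sym2.eq_swap,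
              keep _ _ hq hvx hqx⟩
        · exact ⟨p, q, hpq, keep _ _ hp hvx hpx, keep _ _ hq hvx hqx⟩
      by_cases hqx : q = x
      · exact key q p hpq.symm hq hp (fun h' => hpq (h'.trans hqx.symm))
      · exact key p q hpq hp hq hqx

/-- Moving an inner vertex `p` whose tree neighbours form a clique into the tree edge `ab`. -/
lemma relocate {p a b : V} (h : GoodTree G A S T) (hp : p ∈ A) (hpS : p ∉ S)
    (hcl : ∀ y z, s(p, y) ∈ T → s(p, z) ∈ T → y ≠ z → G.Adj y z) (hab : s(a, b) ∈ T)
    (hpa : G.Adj p a) (hpb : G.Adj p b) :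
    ∃ T', GoodTree G A S T' ∧ s(p, a) ∈ T' ∧ s(p, b) ∈ T' := by
  obtain ⟨T1, h1, hkeep⟩ := bypass hp _ T rfl h (h.deg p hp hpS) hcl
  have h2 := h1.subdivide (hkeep a b hab hpa.ne' hpb.ne') (x := p) (fun h => h.2 rfl) hpa hpb
  rw [Set.insert_sdiff_singleton, Set.insert_eq_of_mem hp] at h2
  exact ⟨_, h2, Or.inl rfl, Or.inr (Or.inl rfl)⟩

end GoodTree

/-! ### Extending a spanning tree by a simplicial vertex -/

/-- A simplicial vertex `s` with at least two neighbours can be inserted into a good tree as an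
inner vertex. It suffices to find a good tree with an edge between two neighbours of `s`, to be
subdivided. If there is none, chordality provides neighbours `x`, `p` of `s` and a common
neighbour `q` of theirs outside `N[s]`; claw-freeness makes the tree neighbours of any neighbour of
`s` a clique, so such vertices can be moved around in the tree until `xp` is a tree edge. -/
lemma exists_goodTree_insert {V : Type*} [Finite V] {G : SimpleGraph V} (hC : ChordProp G)
    (hK : ClawProp G) {A S : Set V} {s : V} {T : Set (Sym2 V)} (hsA : s ∉ A)
    (hsimp : ∀ x ∈ A, ∀ y ∈ A, G.Adj s x → G.Adj s y → x ≠ y → G.Adj x y)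
    (hS : ∀ v ∈ S, Simp G (insert s A) v)
    (h2 : ∃ x ∈ A, ∃ p ∈ A, x ≠ p ∧ G.Adj s x ∧ G.Adj s p)
    (hT : GoodTree G A S T) : ∃ T', GoodTree G (insert s A) S T' := by
  by_contra hcon
  have hno : ∀ T, GoodTree G A S T → ∀ x p, s(x, p) ∈ T → G.Adj s x → ¬ G.Adj s p :=
    fun T hT x p hxp hsx hsp => hcon ⟨_, hT.subdivide hxp hsA hsx hsp⟩
  have sne : ∀ {y}, y ∈ A → s ≠ y := fun hy h => hsA (h ▸ hy)
  have F1 : ∀ x y z, y ∈ A → z ∈ A → G.Adj s x → G.Adj x y → G.Adj x z → ¬ G.Adj s y →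
      ¬ G.Adj s z → y ≠ z → G.Adj y z := by
    intro x y z hy hz hsx hxy hxz hsy hsz hyz
    rcases hK x s y z hsx.symm hxy hxz (sne hy) (sne hz) hyz with h | h | h
    · exact absurd h hsy
    · exact absurd h hsz
    · exact h
  have F2 : ∀ x q, q ∈ A → G.Adj s x → G.Adj x q → ¬ G.Adj s q → x ∉ S := fun x q hq hsx hxq hsq hx =>
    hsq ((hS x hx).2 s (Or.inl rfl) q (Or.inr hq) hsx.symm hxq (sne hq))
  have hcl : ∀ T, GoodTree G A S T → ∀ p, G.Adj s p →
      ∀ y z, s(p, y) ∈ T → s(p, z) ∈ T → y ≠ z → G.Adj y z := by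
    intro T hT p hsp y z hy hz hyz
    have h1 := hT.sub _ _ hy
    have h2 := hT.sub _ _ hz
    exact F1 p y z h1.2.2 h2.2.2 hsp h1.1 h2.1 (hno T hT p y hy hsp) (hno T hT p z hz hsp) hyz
  have opt1 : ∀ T, GoodTree G A S T → ∀ x p q, x ∈ A → p ∈ A → G.Adj s x → G.Adj s p → x ≠ p →
      q ∈ A → ¬ G.Adj s q → G.Adj q p → s(x, q) ∈ T → False := by
    intro T hT x p q hx hp hsx hsp hxp hq hsq hqp hxq
    obtain ⟨T', hT', h1, _⟩ := hT.relocate hp (F2 p q hq hsp hqp.symm hsq) (hcl T hT p hsp) hxq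
      (hsimp p hp x hx hsp hsx hxp.symm) hqp.symm
    exact hno T' hT' p x h1 hsp hsx
  have main : ∀ x p q, x ∈ A → p ∈ A → G.Adj s x → G.Adj s p → x ≠ p →
      q ∈ A → ¬ G.Adj s q → G.Adj q x → G.Adj q p → False := by
    intro x p q hx hp hsx hsp hxp hq hsq hqx hqp
    have hxqT : s(x, q) ∉ T := fun h => opt1 T hT x p q hx hp hsx hsp hxp hq hsq hqp h
    have hxS : x ∉ S := F2 x q hq hsx hqx.symm hsq
    by_cases hw : ∃ w, s(q, w) ∈ T ∧ G.Adj x w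
    · obtain ⟨w, hqw, hxw⟩ := hw
      have h3 := hT.sub _ _ hqw
      by_cases hsw : G.Adj s w
      · exact opt1 T hT w x q h3.2.2 hx hsw hsx hxw.ne' hq hsq hqx (GoodTree.swap hqw)
      · obtain ⟨T', hT', h1, _⟩ := hT.relocate hx hxS (hcl T hT x hsx) hqw hqx.symm hxw
        exact opt1 T' hT' x p q hx hp hsx hsp hxp hq hsq hqp h1
    · push Not at hw
      have hqcl : ∀ y z, s(q, y) ∈ T → s(q, z) ∈ T → y ≠ z → G.Adj y z := by
        intro y z hy hz hyz
        have hxy : x ≠ y := by rintro rfl; exact hxqT (GoodTree.swap hy)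
        have hxz : x ≠ z := by rintro rfl; exact hxqT (GoodTree.swap hz)
        rcases hK q x y z hqx (hT.sub _ _ hy).1 (hT.sub _ _ hz).1 hxy hxz hyz with h | h | h
        · exact absurd h (hw y hy)
        · exact absurd h (hw z hz)
        · exact h
      have hqS : q ∉ S := by
        intro hqS
        obtain ⟨w, hqw⟩ := hT.exists_edge hq hx hqx.ne'
        have hxw : x ≠ w := by rintro rfl; exact hxqT (GoodTree.swap hqw)
        have h3 := hT.sub _ _ hqw
        exact hw w hqw ((hS q hqS).2 x (Or.inr hx) w (Or.inr h3.2.2) hqx h3.1 hxw)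
      obtain ⟨y, hxy⟩ := hT.exists_edge hx hq hqx.ne
      have h3 := hT.sub _ _ hxy
      have hqy : q ≠ y := by rintro rfl; exact hxqT hxy
      obtain ⟨T', hT', h1, _⟩ := hT.relocate hq hqS hqcl hxy hqx
        (F1 x q y hq h3.2.2 hsx hqx.symm h3.1 hsq (hno T hT x y hxy hsx) hqy)
      exact opt1 T' hT' x p q hx hp hsx hsp hxp hq hsq hqp (GoodTree.swap h1)
  obtain ⟨x, hx, p, hp, hxp, hsx, hsp⟩ := h2
  set D : Set V := {w | w ∈ A ∧ ¬ G.Adj s w} with hD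
  -- follow the tree path from `x`: it can never reach another neighbour of `s`
  have key : ∀ z, TreeReach T x z → z = x ∨ (z ∈ D ∧ ∃ y ∈ D, G.Adj x y ∧ Conn G D y z) := by
    intro z hz
    induction hz with
    | refl => exact Or.inl rfl
    | @tail z z' _ hzz' ih =>
      have h3 := hT.sub _ _ hzz'
      by_cases hz' : z' = x
      · exact Or.inl hz'
      rcases ih with rfl | ⟨hz, y, hy, hxy, hyz⟩
      · have hz'D : z' ∈ D := ⟨h3.2.2, hno T hT _ _ hzz' hsx⟩
        exact Or.inr ⟨hz'D, z', hz'D, h3.1, Conn.refl _⟩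
      · by_cases hsz' : G.Adj s z'
        · exfalso
          obtain ⟨q, hqD, hqx, hqz⟩ := exists_common_neighbor hC
            (hsimp x hx z' h3.2.2 hsx hsz' (Ne.symm hz')) (fun h => h.2 hsx) (fun h => h.2 hsz')
            hy hxy hyz h3.1
          exact main x z' q hx h3.2.2 hsx hsz' (Ne.symm hz') hqD.1 hqD.2 hqx hqz
        · have hz'D : z' ∈ D := ⟨h3.2.2, hsz'⟩
          exact Or.inr ⟨hz'D, y, hy, hxy, hyz.trans (Conn.single h3.1 hz hz'D)⟩
  rcases key p (hT.conn x hx p hp) with h | h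
  · exact hxp h.symm
  · exact h.1.2 hsp

/-- If `S` consists of simplicial vertices and meets every component of every vertex-deleted
subgraph, then some spanning tree has all its leaves in `S`. The induction removes a simplicial
vertex `s`. When `s ∉ S`, it is inserted back as an inner vertex. When `s ∈ S`, it is attached as a
leaf; if `S \ {s}` no longer meets all components, then `s` is replaced by a neighbour `s'` that
became simplicial in a smallest component missed. -/
lemma exists_goodTree {V : Type*} [Finite V] {G : SimpleGraph V} (hC : ChordProp G)
    (hK : ClawProp G) : ∀ (n : ℕ) (A S : Set V), A.ncard = n → A.Nonempty →
      (∀ a ∈ A, ∀ b ∈ A, Conn G A a b) → (∀ s ∈ S, Simp G A s) → S.Nonempty →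
      (∀ v ∈ A, ∀ a ∈ A, a ≠ v → ∃ b ∈ S, b ≠ v ∧ Conn G (A \ {v}) a b) →
      ∃ T, GoodTree G A S T := by
  intro n
  induction n using Nat.strong_induction_on with
  | _ n ih =>
  intro A S hn hA hconn hS hSne hhit
  by_cases hone : ∃ a, A = {a}
  · obtain ⟨a, rfl⟩ := hone
    obtain ⟨s, hs⟩ := hSne
    have hsa : s = a := (hS s hs).1
    subst hsa
    refine ⟨∅, by simp, ?_, by simp, ?_⟩
    · rintro a rfl b rfl; exact TreeReach.refl _
    · rintro v rfl hv; exact absurd hs hv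
  have hother : ∀ s ∈ A, ∃ a ∈ A, a ≠ s := by
    intro s hs
    by_contra! h
    exact hone ⟨s, Set.eq_singleton_iff_unique_mem.2 ⟨hs, h⟩⟩
  -- pick a simplicial vertex, outside `S` if possible
  obtain ⟨s, hs, hsS⟩ : ∃ s, Simp G A s ∧ (s ∈ S → ∀ t, Simp G A t → t ∈ S) := by
    by_cases h : ∃ s, Simp G A s ∧ s ∉ S
    · obtain ⟨s, hs, hsS⟩ := h
      exact ⟨s, hs, fun h => absurd h hsS⟩
    · push Not at h
      obtain ⟨s, hs⟩ := hSne
      exact ⟨s, hS s hs, fun _ => h⟩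
  have hsA := hs.1
  set A' : Set V := A \ {s} with hA'
  have hA'A : A' ⊆ A := Set.sdiff_subset
  have hins : insert s A' = A := by
    rw [hA', Set.insert_sdiff_singleton, Set.insert_eq_of_mem hsA]
  have hsA' : s ∉ A' := fun h => h.2 rfl
  have hlt : A'.ncard < n := hn ▸ Set.ncard_sdiff_singleton_lt_of_mem hsA
  have hA'ne : A'.Nonempty := by
    obtain ⟨a, ha, has⟩ := hother s hsA
    exact ⟨a, ha, has⟩
  have hconn' : ∀ a ∈ A', ∀ b ∈ A', Conn G A' a b := fun a ha b hb =>
    ((hconn a ha.1 b hb.1).avoid hs.2 ha.2).1 hb.2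
  have hcomm : ∀ v, (A \ {v}) \ {s} = A' \ {v} := fun v => by
    rw [hA', sdiff_right_comm]
  have havoid : ∀ v a b, a ≠ s → b ≠ s → Conn G (A \ {v}) a b → Conn G (A' \ {v}) a b := by
    intro v a b ha hb h
    rw [← hcomm]
    exact (h.avoid (fun x hx y hy => hs.2 x hx.1 y hy.1) ha).1 hb
  by_cases hsinS : s ∉ S
  · have hSA' : ∀ t ∈ S, t ∈ A' := fun t ht => ⟨(hS t ht).1, fun h => hsinS (h ▸ ht)⟩
    obtain ⟨T, hT⟩ := ih _ hlt A' S rfl hA'ne hconn'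
      (fun t ht => (hS t ht).mono hA'A (hSA' t ht)) hSne (by
        intro v hv a ha hav
        obtain ⟨b, hb, hbv, hab⟩ := hhit v hv.1 a ha.1 hav
        exact ⟨b, hb, hbv, havoid v a b ha.2 (hSA' b hb).2 hab⟩)
    have := exists_goodTree_insert hC hK hsA' (fun x hx y hy => hs.2 x hx.1 y hy.1)
      (hins.symm ▸ hS) (by
        obtain ⟨a, ha⟩ := hA'ne
        obtain ⟨x, hx, hxs, hxs', _⟩ := (hconn a ha.1 s hsA).firstHit ha.2
        obtain ⟨b, hb, hbx, hsb⟩ := hhit x hx s hsA hxs.symm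
        obtain ⟨p, hp, hps, hps', _⟩ := hsb.symm.firstHit (hSA' b hb).2
        exact ⟨x, ⟨hx, hxs⟩, p, ⟨hp.1, hps⟩, fun h => hp.2 h.symm, hxs'.symm, hps'.symm⟩) hT
    rwa [hins] at this
  push Not at hsinS
  have hall := hsS hsinS
  obtain ⟨b0, hb0S, hb0s⟩ : ∃ b ∈ S, b ≠ s := by
    obtain ⟨a, ha, has⟩ := hother s hsA
    obtain ⟨b, hb, hbs, _⟩ := hhit s hsA a ha has
    exact ⟨b, hb, hbs⟩
  have hSA' : ∀ t ∈ S \ {s}, t ∈ A' := fun t ht => ⟨(hS t ht.1).1, ht.2⟩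
  -- `bad v a`: the component of `a` in `A' \ {v}` misses `S \ {s}`
  let bad : V × V → Prop := fun p => p.1 ∈ A' ∧ p.2 ∈ A' ∧ p.2 ≠ p.1 ∧
    ∀ b ∈ S, b ≠ s → b ≠ p.1 → ¬ Conn G (A' \ {p.1}) p.2 b
  by_cases hbad : ∃ p, bad p
  swap
  · obtain ⟨T, hT⟩ := ih _ hlt A' (S \ {s}) rfl hA'ne hconn'
      (fun t ht => (hS t ht.1).mono hA'A (hSA' t ht)) ⟨b0, hb0S, hb0s⟩ (by
        intro v hv a ha hav
        by_contra! h
        exact hbad ⟨(v, a), hv, ha, hav, fun b hb hbs hbv hab => h b ⟨hb, hbs⟩ hbv hab⟩)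
    obtain ⟨a, ha⟩ := hA'ne
    obtain ⟨x, hx, hxs, hxs', _⟩ := (hconn a ha.1 s hsA).firstHit ha.2
    have := hT.addLeaf (S := S) hsA' (x := x) ⟨hx, hxs⟩ hxs'.symm hsinS
      (fun v _ hv hv' => absurd hv.1 hv')
    rw [hins] at this
    exact ⟨_, this⟩
  obtain ⟨⟨v, a⟩, ⟨hv, ha, hav, hmiss⟩, hmin⟩ := exists_minimalFor_of_wellFoundedLT bad
    (fun p => {z | Conn G (A' \ {p.1}) p.2 z}.ncard) hbad
  simp only at hv ha hav hmiss hmin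
  set E : Set V := {z | Conn G (A' \ {v}) a z} with hE
  have hEA' : E ⊆ A' \ {v} := fun z hz => Conn.mem hz ⟨ha, hav⟩
  obtain ⟨s', hs'E, hs'⟩ := exists_simplicial_of_closed hC (A := A') (E := E) (v := v)
    (fun z hz => (hEA' hz).1) ⟨a, Conn.refl _⟩ (fun h => (hEA' h).2 rfl) (by
      intro x hx y hy hxy
      by_cases hyv : y = v
      · exact Or.inr hyv
      · exact Or.inl (Conn.trans hx (Conn.single hxy (hEA' hx) ⟨hy, hyv⟩)))
  have hs'A' := hs'.1
  have hs'v : s' ≠ v := (hEA' hs'E).2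
  have hEmiss : ∀ b ∈ S, b ≠ s → b ∉ E := by
    intro b hb hbs hbE
    exact hmiss b hb hbs (hEA' hbE).2 hbE
  have hs'S : s' ∉ S := fun h => hEmiss s' h hs'A'.2 hs'E
  have hss' : G.Adj s s' := by
    by_contra hss'
    refine hs'S (hall s' ⟨hs'A'.1, fun x hx y hy h1 h2 hxy => ?_⟩)
    have hx' : x ≠ s := by rintro rfl; exact hss' h1.symm
    have hy' : y ≠ s := by rintro rfl; exact hss' h2.symm
    exact hs'.2 x ⟨hx, hx'⟩ y ⟨hy, hy'⟩ h1 h2 hxy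
  have hhit' : ∀ u ∈ A', ∀ c ∈ A', c ≠ u →
      ∃ b ∈ insert s' (S \ {s}), b ≠ u ∧ Conn G (A' \ {u}) c b := by
    intro u hu c hc hcu
    obtain ⟨b, hb, hbu, hcb⟩ := hhit u hu.1 c hc.1 hcu
    by_cases hbs : b = s
    swap
    · exact ⟨b, Or.inr ⟨hb, hbs⟩, hbu, havoid u c b hc.2 hbs hcb⟩
    subst hbs
    by_cases hus' : s' = u
    swap
    · exact ⟨s', Or.inl rfl, hus', havoid u c s' hc.2 hs'A'.2
        (hcb.trans (Conn.single hss' ⟨hsA, hbu⟩ ⟨hs'A'.1, hus'⟩))⟩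
    subst hus'
    by_contra! hnone
    have hbad' : bad (s', c) := ⟨hu, hc, hcu, fun d hd hdb hds' => hnone d (Or.inr ⟨hd, hdb⟩) hds'⟩
    have hE'A : ∀ z, Conn G (A' \ {s'}) c z → z ∈ A' \ {s'} := fun z hz => hz.mem ⟨hc, hcu⟩
    by_cases hvE' : Conn G (A' \ {s'}) c v
    · -- every element of `S` other than `s` lies on neither side of `s'`
      have hb0A' : b0 ∈ A' := hSA' b0 ⟨hb0S, hb0s⟩
      have hb0s' : b0 ≠ s' := fun h => hs'S (h ▸ hb0S)
      obtain ⟨t, ht, hts', hts, hbt⟩ := (hconn' b0 hb0A' s' hs'A').firstHit hb0s'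
      have hsub : ∀ w, Conn G (A' \ {s'}) b0 w → w ∈ A' \ {v} := by
        intro w hw
        refine ⟨(hw.mem ⟨hb0A', hb0s'⟩).1, ?_⟩
        rintro rfl
        exact hbad'.2.2.2 b0 hb0S hb0s hb0s' (hvE'.trans hw.symm)
      have h1 : Conn G (A' \ {v}) b0 t := hbt.restrict hsub
      have h2 : Conn G (A' \ {v}) b0 s' :=
        h1.trans (Conn.single hts (hsub t hbt) (hEA' hs'E))
      exact hEmiss b0 hb0S hb0s (Conn.trans hs'E h2.symm)
    · -- the component beyond `s'` is a smaller missed component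
      obtain ⟨t, ht, hts, htb, hct⟩ := hcb.firstHit hc.2
      rw [hcomm] at hct
      have hsub : ∀ w, Conn G (A' \ {s'}) c w → w ∈ A' \ {v} := fun w hw =>
        ⟨(hE'A w hw).1, by rintro rfl; exact hvE' hw⟩
      have hts' : G.Adj s' t := hs.2 s' hs'A'.1 t ht.1 hss' htb.symm (fun h => ht.2 h.symm)
      have htE : t ∈ E := Conn.trans hs'E (Conn.single hts' (hEA' hs'E) (hsub t hct))
      have hle : {z | Conn G (A' \ {s'}) c z} ⊆ E := by
        intro z hz
        have : Conn G (A' \ {v}) t z :=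
          (hct.symm.trans hz).restrict (fun w hw => hsub w (hct.trans hw))
        exact Conn.trans htE this
      have hlt' := Set.ncard_lt_ncard
        (hle.ssubset_of_ne (fun h => (hE'A s' (h ▸ hs'E : s' ∈ {z | _})).2 rfl))
      have := hmin hbad' hlt'.le
      exact absurd hlt' (not_lt.2 this)
  obtain ⟨T, hT⟩ := ih _ hlt A' (insert s' (S \ {s})) rfl hA'ne hconn' (by
      rintro t (rfl | ht)
      · exact hs'
      · exact (hS t ht.1).mono hA'A (hSA' t ht)) ⟨s', Or.inl rfl⟩ hhit'
  have := hT.addLeaf (S := S) hsA' hs'A' hss' hsinS (by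
    rintro w _ (rfl | hw) hwS
    · exact ⟨rfl, v, hv, hs'v.symm⟩
    · exact absurd hw.1 hwS)
  rw [hins] at this
  exact ⟨_, this⟩

/-! ### Nonseparable sets and blocks -/

/-- `B` induces a connected subgraph without a cut-vertex of its own. -/
def NonSep {V : Type*} (G : SimpleGraph V) (B : Set V) : Prop :=
  (∀ a ∈ B, ∀ b ∈ B, Conn G B a b) ∧
    ∀ v ∈ B, ∀ a ∈ B \ {v}, ∀ b ∈ B \ {v}, Conn G (B \ {v}) a b

lemma isBlock_iff {V : Type*} {G : SimpleGraph V} {B : Set V} :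
    IsBlock G B ↔ B.Nonempty ∧ NonSep G B ∧ ∀ B', B ⊆ B' → NonSep G B' → B = B' := by
  have key : ∀ C : Set V, ((G.induce C).Connected ∧ ∀ v ∈ C, (G.induce (C \ {v})).Preconnected) ↔
      C.Nonempty ∧ NonSep G C := by
    intro C
    rw [connected_iff, Set.nonempty_coe_sort]
    simp only [Conn.preconnected_iff, NonSep]
    tauto
  constructor
  · rintro ⟨h1, h2, h3⟩
    obtain ⟨h4, h5⟩ := (key B).1 ⟨h1, h2⟩
    refine ⟨h4, h5, fun B' hBB' hB' => ?_⟩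
    obtain ⟨h6, h7⟩ := (key B').2 ⟨h4.mono hBB', hB'⟩
    exact h3 B' hBB' h6 h7
  · rintro ⟨h1, h2, h3⟩
    obtain ⟨h4, h5⟩ := (key B).2 ⟨h1, h2⟩
    exact ⟨h4, h5, fun B' hBB' h6 h7 => h3 B' hBB' ((key B').1 ⟨h6, h7⟩).2⟩

lemma isCutVertex_iff {V : Type*} {G : SimpleGraph V} {v : V} :
    IsCutVertex G v ↔ ∃ x y, x ≠ v ∧ y ≠ v ∧ ¬ Conn G (Set.univ \ {v}) x y := by
  have : (Set.univ \ {v} : Set V) = {u | u ≠ v} := by ext; simp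
  rw [IsCutVertex, Conn.preconnected_iff, this]
  simp only [Set.mem_ofPred_eq]
  push Not
  constructor
  · rintro ⟨x, hx, y, hy, h⟩; exact ⟨x, y, hx, hy, h⟩
  · rintro ⟨x, y, hx, hy, h⟩; exact ⟨x, hx, y, hy, h⟩

lemma conn_of_not_cut {V : Type*} {G : SimpleGraph V} {v x y : V} (hv : ¬ IsCutVertex G v)
    (hx : x ≠ v) (hy : y ≠ v) : Conn G (Set.univ \ {v}) x y := by
  by_contra h
  exact hv (isCutVertex_iff.2 ⟨x, y, hx, hy, h⟩)

lemma NonSep.conn_diff {V : Type*} {G : SimpleGraph V} {B : Set V} (hB : NonSep G B) (w a b : V)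
    (ha : a ∈ B \ {w}) (hb : b ∈ B \ {w}) : Conn G (B \ {w}) a b := by
  by_cases hw : w ∈ B
  · exact hB.2 w hw a ha b hb
  · rw [Set.sdiff_singleton_eq_self hw] at *
    exact hB.1 a ha b hb

lemma nonSep_pair {V : Type*} {G : SimpleGraph V} {x y : V} (h : G.Adj x y) :
    NonSep G {x, y} := by
  refine ⟨?_, ?_⟩
  · rintro a (rfl | rfl) b (rfl | rfl)
    · exact Conn.refl _
    · exact Conn.single h (by simp) (by simp)
    · exact Conn.single h.symm (by simp) (by simp)
    · exact Conn.refl _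
  · rintro v (rfl | rfl) a ⟨rfl | rfl, ha⟩ b ⟨rfl | rfl, hb⟩ <;>
      first | exact Conn.refl _ | exact absurd rfl ha | exact absurd rfl hb

lemma conn_of_walk {V : Type*} {G : SimpleGraph V} {A : Set V} {a b : V} (p : G.Walk a b)
    (h : ∀ x ∈ p.support, x ∈ A) : Conn G A a b := by
  induction p with
  | nil => exact Conn.refl _
  | cons hadj p ih =>
    have h2 : ∀ x ∈ p.support, x ∈ A := fun x hx => h x (by simp [hx])
    exact (Conn.single hadj (h _ (by simp)) (h2 _ p.start_mem_support)).trans (ih h2)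

lemma exists_path_of_conn {V : Type*} {G : SimpleGraph V} {A : Set V} {a b : V} (ha : a ∈ A)
    (h : Conn G A a b) : ∃ p : G.Walk a b, p.IsPath ∧ ∀ x ∈ p.support, x ∈ A := by
  classical
  have : ∃ p : G.Walk a b, ∀ x ∈ p.support, x ∈ A := by
    induction h with
    | refl => exact ⟨Walk.nil, by simpa using ha⟩
    | tail _ h ih =>
      obtain ⟨p, hp⟩ := ih
      refine ⟨p.concat h.1, fun x hx => ?_⟩
      rw [Walk.support_concat, List.mem_append] at hx
      rcases hx with hx | hx
      · exact hp x hx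
      · rw [List.mem_singleton.1 hx]; exact h.2.2
  obtain ⟨p, hp⟩ := this
  exact ⟨p.bypass, p.bypass_isPath, fun x hx => hp x (p.support_bypass_subset_support hx)⟩

/-- Adding an ear to a nonseparable set keeps it nonseparable. The path may meet `B` in interior
vertices: a vertex `w` misses one of the two halves into which another vertex of the path cuts it. -/
lemma NonSep.ear {V : Type*} {G : SimpleGraph V} {B : Set V} (hB : NonSep G B) {a b : V}
    (ha : a ∈ B) (hb : b ∈ B) (p : G.Walk a b) (hp : p.IsPath) :
    NonSep G (B ∪ {x | x ∈ p.support}) := by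
  classical
  set B' := B ∪ {x | x ∈ p.support} with hB'
  have hsub : B ⊆ B' := Set.subset_union_left
  have key : ∀ w, ∀ x ∈ B' \ {w}, ∃ y ∈ B \ {w}, Conn G (B' \ {w}) x y := by
    rintro w x ⟨hx | hx, hxw⟩
    · exact ⟨x, ⟨hx, hxw⟩, Conn.refl _⟩
    · have hx : x ∈ p.support := hx
      by_cases hw : w ∈ (p.takeUntil x hx).support
      · have hw2 : w ∉ (p.dropUntil x hx).support := by
          intro hw2
          have hnd := hp.support_nodup
          rw [← p.take_spec hx, Walk.support_append, List.nodup_append] at hnd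
          rcases (Walk.mem_support_iff _).1 hw2 with h | h
          · exact hxw h.symm
          · exact hnd.2.2 w hw w h rfl
        refine ⟨b, ⟨hb, fun h => hw2 ?_⟩, conn_of_walk (p.dropUntil x hx) fun y hy => ⟨Or.inr ?_, ?_⟩⟩
        · rw [← Set.mem_singleton_iff.1 h]; exact Walk.end_mem_support _
        · exact p.support_dropUntil_subset_support hx hy
        · rintro rfl; exact hw2 hy
      · have hax : Conn G (B' \ {w}) a x := by
          refine conn_of_walk (p.takeUntil x hx) fun y hy => ⟨Or.inr ?_, ?_⟩
          · exact p.support_takeUntil_subset_support hx hy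
          · rintro rfl; exact hw hy
        refine ⟨a, ⟨ha, fun h => hw ?_⟩, hax.symm⟩
        rw [← Set.mem_singleton_iff.1 h]; exact Walk.start_mem_support _
  have h1 : ∀ x ∈ B', ∃ y ∈ B, Conn G B' x y := by
    rintro x (hx | hx)
    · exact ⟨x, hx, Conn.refl _⟩
    · exact ⟨b, hb, conn_of_walk (p.dropUntil x hx) fun y hy =>
        Or.inr (p.support_dropUntil_subset_support hx hy)⟩
  refine ⟨fun x hx y hy => ?_, fun w _ x hx y hy => ?_⟩
  · obtain ⟨x', hx', hxx⟩ := h1 x hx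
    obtain ⟨y', hy', hyy⟩ := h1 y hy
    exact hxx.trans (((hB.1 x' hx' y' hy').mono hsub).trans hyy.symm)
  · obtain ⟨x', hx', hxx⟩ := key w x hx
    obtain ⟨y', hy', hyy⟩ := key w y hy
    exact hxx.trans (((hB.conn_diff w x' y' hx' hy').mono
      (Set.sdiff_subset_sdiff_left hsub)).trans hyy.symm)

lemma NonSep.exists_block {V : Type*} [Finite V] {G : SimpleGraph V} {C : Set V} (hC : NonSep G C)
    (hne : C.Nonempty) : ∃ B, IsBlock G B ∧ C ⊆ B := by
  obtain ⟨B, hCB, hB⟩ := (Set.toFinite {B : Set V | NonSep G B}).exists_le_maximal hC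
  exact ⟨B, isBlock_iff.2 ⟨hne.mono hCB, hB.prop, fun B' h h' => hB.eq_of_le h' h⟩, hCB⟩

/-- A block contains all neighbours of those of its vertices that are not cut-vertices. -/
lemma IsBlock.neighbor_mem {V : Type*} {G : SimpleGraph V} {B : Set V} (hB : IsBlock G B)
    {c d z : V} (hc : c ∈ B) (hd : d ∈ B) (hcd : c ≠ d) (hcut : ¬ IsCutVertex G d)
    (hz : G.Adj d z) : z ∈ B := by
  obtain ⟨-, hN, hmax⟩ := isBlock_iff.1 hB
  obtain ⟨p, hp, hps⟩ := exists_path_of_conn (A := Set.univ \ {d}) ⟨trivial, hz.ne'⟩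
    (conn_of_not_cut hcut hz.ne' hcd)
  have hp' : (Walk.cons hz p).IsPath := hp.cons fun h => (hps d h).2 rfl
  rw [hmax _ Set.subset_union_left (hN.ear hd hc _ hp')]
  exact Or.inr (by simp)

lemma IsBlock.exists_ne_s19 {V : Type*} {G : SimpleGraph V} {B : Set V} (hB : IsBlock G B)
    {c z : V} (hz : G.Adj c z) : ∃ d ∈ B, d ≠ c := by
  by_contra! h
  obtain ⟨-, -, hmax⟩ := isBlock_iff.1 hB
  have h1 : B = {c, z} := hmax _ (fun x hx => Or.inl (h x hx)) (nonSep_pair hz)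
  exact hz.ne' (h z (h1 ▸ (Or.inr rfl : z ∈ ({c, z} : Set V))))

/-- `B` is a block whose only cut-vertex of `G` is `c`. -/
structure LeafBlock {V : Type*} (G : SimpleGraph V) (B : Set V) (c : V) : Prop where
  block : IsBlock G B
  cut : IsCutVertex G c
  mem : c ∈ B
  uniq : ∀ w ∈ B, IsCutVertex G w → w = c

namespace LeafBlock

variable {V : Type*} {G : SimpleGraph V} {B B' : Set V} {c c' : V}

lemma neighbor_mem (h : LeafBlock G B c) {e y : V} (he : e ∈ B) (hec : e ≠ c) (hy : G.Adj e y) :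
    y ∈ B :=
  h.block.neighbor_mem h.mem he hec.symm (fun hcut => hec (h.uniq e he hcut)) hy

lemma nonempty (hG : ∀ a b, Conn G Set.univ a b) (h : LeafBlock G B c) : (B \ {c}).Nonempty := by
  obtain ⟨x, -, hx, -⟩ := isCutVertex_iff.1 h.cut
  obtain ⟨t, -, -, ht, -⟩ := (hG x c).firstHit hx
  obtain ⟨d, hd, hdc⟩ := h.block.exists_ne_s19 ht.symm
  exact ⟨d, hd, hdc⟩

lemma subset_of_mem (h : LeafBlock G B c) (h' : LeafBlock G B' c') {d : V} (hd : d ∈ B \ {c})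
    (hd' : d ∈ B' \ {c'}) : B \ {c} ⊆ B' \ {c'} := by
  intro x hx
  refine ((isBlock_iff.1 h.block).2.1.conn_diff c d x hd hx).closed hd' fun u hu y hy huy =>
    ⟨h'.neighbor_mem hu.1 hu.2 huy, ?_⟩
  rintro rfl
  exact hy.2 (h.uniq _ hy.1 h'.cut)

/-- Distinct leaf blocks share at most cut-vertices. -/
lemma eq_of_mem (h : LeafBlock G B c) (h' : LeafBlock G B' c') {d : V} (hd : d ∈ B \ {c})
    (hd' : d ∈ B' \ {c'}) : B = B' := by
  have heq := (h.subset_of_mem h' hd hd').antisymm (h'.subset_of_mem h hd' hd)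
  obtain ⟨t, ht, htc, hta, -⟩ := ((isBlock_iff.1 h.block).2.1.1 d hd.1 c h.mem).firstHit hd.2
  have ht' : t ∈ B' \ {c'} := heq ▸ (⟨ht, htc⟩ : t ∈ B \ {c})
  have hcc : c = c' := h'.uniq c (h'.neighbor_mem ht'.1 ht'.2 hta) h.cut
  subst hcc
  rw [← Set.insert_sdiff_self_of_mem h.mem, heq, Set.insert_sdiff_self_of_mem h'.mem]

/-- Every spanning tree has a leaf in each leaf block, at the end of a longest path from the
cut-vertex into the block. -/
lemma exists_leaf [Finite V] (hG : ∀ a b, Conn G Set.univ a b) (h : LeafBlock G B c)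
    {T : SimpleGraph V} (hTG : T ≤ G) (hT : T.IsTree) :
    ∃ e ∈ B \ {c}, (T.neighborSet e).ncard = 1 := by
  classical
  have := Fintype.ofFinite V
  let P : ℕ → Prop := fun n => ∃ e ∈ B \ {c}, ∃ p : T.Walk c e, p.IsPath ∧ p.length = n
  have hbdd : ∀ n, P n → n ≤ Fintype.card V := by
    rintro n ⟨e, -, p, hp, rfl⟩
    exact hp.length_lt.le
  have hex : ∃ n, P n := by
    obtain ⟨e, he⟩ := h.nonempty hG
    obtain ⟨p, hp⟩ := hT.1.exists_isPath c e
    exact ⟨_, e, he, p, hp, rfl⟩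
  obtain ⟨n0, hn0⟩ := hex
  obtain ⟨e, he, p, hp, hpn⟩ := Nat.findGreatest_spec (hbdd n0 hn0) hn0
  have hmax : ∀ n, P n → n ≤ p.length := by
    intro n hn
    rw [hpn]
    exact Nat.le_findGreatest (hbdd n hn) hn
  have hnil : ¬ p.Nil := Walk.not_nil_of_ne (fun h => he.2 h.symm)
  refine ⟨e, he, Set.ncard_eq_one.2 ⟨p.penultimate, Set.eq_singleton_iff_unique_mem.2
    ⟨(p.adj_penultimate hnil).symm, fun f hf => ?_⟩⟩⟩
  have hf : T.Adj e f := hf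
  by_cases hfp : f ∈ p.support
  · have hq : ((p.takeUntil f hfp).concat hf.symm).IsPath := by
      refine Walk.IsPath.concat (hp.takeUntil hfp) ?_ hf.symm
      exact Walk.endpoint_notMem_support_takeUntil hp hfp hf.ne
    have := (hT.2.subsingleton_path _ _).elim ⟨_, hp⟩ ⟨_, hq⟩
    rw [show p = _ from congrArg Subtype.val this, Walk.penultimate_concat]
  · exfalso
    have hfc : f ≠ c := by rintro rfl; exact hfp p.start_mem_support
    have := hmax _ ⟨f, ⟨h.neighbor_mem he.1 he.2 (hTG hf), hfc⟩, p.concat hf,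
      hp.concat hfp hf, rfl⟩
    rw [Walk.length_concat] at this
    omega

end LeafBlock

/-- The vertex set of every component of `G - v`, for `v` a cut-vertex, contains a leaf block minus
its cut-vertex: a component that is minimal over all cut-vertices is itself of this form. -/
lemma exists_leafBlock {V : Type*} [Finite V] {G : SimpleGraph V}
    (hG : ∀ a b, Conn G Set.univ a b) :
    ∀ (n : ℕ) (v a : V), {x | Conn G (Set.univ \ {v}) a x}.ncard = n → IsCutVertex G v → a ≠ v →
      ∃ B c, LeafBlock G B c ∧ ∀ x ∈ B \ {c}, Conn G (Set.univ \ {v}) a x := by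
  intro n
  induction n using Nat.strong_induction_on with
  | _ n ih =>
  rintro v a rfl hv hav
  set D : Set V := {x | Conn G (Set.univ \ {v}) a x} with hD
  have hDv : ∀ x ∈ D, x ≠ v := fun x hx => (Conn.mem hx ⟨trivial, hav⟩).2
  have hDcl : ∀ x ∈ D, ∀ y, y ≠ v → G.Adj x y → y ∈ D := fun x hx y hy hxy =>
    Conn.trans hx (Conn.single hxy ⟨trivial, hDv x hx⟩ ⟨trivial, hy⟩)
  by_cases hcut : ∃ w ∈ D, IsCutVertex G w
  · obtain ⟨w, hwD, hw⟩ := hcut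
    have hvw : v ≠ w := (hDv w hwD).symm
    -- some component of `G - w` misses `v`
    obtain ⟨x, hxw, hxv⟩ : ∃ x, x ≠ w ∧ ¬ Conn G (Set.univ \ {w}) x v := by
      obtain ⟨x, y, hx, hy, hxy⟩ := isCutVertex_iff.1 hw
      by_cases h : Conn G (Set.univ \ {w}) x v
      · exact ⟨y, hy, fun h' => hxy (h.trans h'.symm)⟩
      · exact ⟨x, hx, h⟩
    have hsub : ∀ z, Conn G (Set.univ \ {w}) x z → z ∈ D := by
      obtain ⟨t, -, htw, hadj, hxt⟩ := (hG x w).firstHit hxw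
      have htv : t ≠ v := by rintro rfl; exact hxv hxt
      have htD : t ∈ D := hDcl w hwD t htv hadj.symm
      intro z hz
      have htz : Conn G (Set.univ \ {v}) t z := by
        refine (hxt.symm.trans hz).restrict fun y hy => ⟨trivial, ?_⟩
        rintro rfl
        exact hxv (hxt.trans hy)
      exact Conn.trans htD htz
    have hlt : {z | Conn G (Set.univ \ {w}) x z}.ncard < D.ncard := by
      refine Set.ncard_lt_ncard ⟨hsub, fun h => ?_⟩
      exact (Conn.mem (h hwD) ⟨trivial, hxw⟩).2 rfl
    obtain ⟨B, c, hB, hBc⟩ := ih _ hlt w x rfl hw hxw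
    exact ⟨B, c, hB, fun y hy => hsub y (hBc y hy)⟩
  · push Not at hcut
    have hvD : v ∉ D := fun h => hDv v h rfl
    have hdiff : insert v D \ {v} = D := by
      rw [Set.insert_sdiff_of_mem _ (Set.mem_singleton v), Set.sdiff_singleton_eq_self hvD]
    have hDconn : ∀ x ∈ D, ∀ y ∈ D, Conn G D x y := fun x hx y hy =>
      (Conn.trans (Conn.symm hx) hy).restrict fun z hz => Conn.trans hx hz
    -- every vertex of `D` other than `w` reaches `v` without leaving `D ∪ {v}` or meeting `w`
    have hreach : ∀ w ∈ D, ∀ x ∈ insert v D \ {w}, Conn G (insert v D \ {w}) x v := by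
      rintro w hw x ⟨rfl | hx, hxw⟩
      · exact Conn.refl _
      obtain ⟨t, ht, htv, hadj, hxt⟩ :=
        (conn_of_not_cut (hcut w hw) hxw (hDv w hw).symm).firstHit (hDv x hx)
      have hxt' : Conn G (insert v D \ {w}) x t := by
        refine hxt.restrict fun z hz => ⟨Or.inr ?_, (hz.mem ⟨⟨trivial, hxw⟩, hDv x hx⟩).1.2⟩
        exact hz.closed hx fun y hy z hz hyz => hDcl y hy z hz.2 hyz
      exact hxt'.trans (Conn.single hadj (hxt'.mem ⟨Or.inr hx, hxw⟩)
        ⟨Or.inl rfl, (hDv w hw).symm⟩)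
    have haD : a ∈ D := Conn.refl _
    obtain ⟨t, -, htv, hadj, hat⟩ := (hG a v).firstHit hav
    have hv' : ∀ x ∈ insert v D, Conn G (insert v D) x v := by
      rintro x (rfl | hx)
      · exact Conn.refl _
      · exact ((hDconn x hx t hat).mono (Set.subset_insert _ _)).trans
          (Conn.single hadj (Or.inr hat) (Or.inl rfl))
    have hNS : NonSep G (insert v D) := by
      refine ⟨fun x hx y hy => (hv' x hx).trans (hv' y hy).symm, ?_⟩
      rintro w (rfl | hw) x hx y hy
      · rw [hdiff] at *
        exact hDconn x hx y hy
      · exact (hreach w hw x hx).trans (hreach w hw y hy).symm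
    refine ⟨insert v D, v, ⟨isBlock_iff.2 ⟨⟨v, Or.inl rfl⟩, hNS, fun B' hB' hN => ?_⟩, hv,
      Or.inl rfl, ?_⟩, fun x hx => ?_⟩
    · refine hB'.antisymm fun z hz => ?_
      by_cases hzv : z = v
      · exact Or.inl hzv
      · exact Or.inr ((hN.conn_diff v a z ⟨hB' (Or.inr haD), hav⟩ ⟨hz, hzv⟩).mono
          (Set.sdiff_subset_sdiff_left (Set.subset_univ _)))
    · rintro w (rfl | hw) hwc
      · rfl
      · exact absurd hwc (hcut w hw)
    · rw [hdiff] at hx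
      exact hx

/-- Every cut-vertex lies in at least two blocks. -/
lemma exists_two_blocks {V : Type*} [Finite V] {G : SimpleGraph V}
    (hG : ∀ a b, Conn G Set.univ a b) {c : V} (hc : IsCutVertex G c) :
    ∃ B B', IsBlock G B ∧ IsBlock G B' ∧ c ∈ B ∧ c ∈ B' ∧ B ≠ B' := by
  obtain ⟨x, y, hx, hy, hxy⟩ := isCutVertex_iff.1 hc
  obtain ⟨s, -, hs, hsa, hsx⟩ := (hG x c).firstHit hx
  obtain ⟨t, -, ht, hta, hty⟩ := (hG y c).firstHit hy
  obtain ⟨B, hB, hBs⟩ := (nonSep_pair hsa).exists_block ⟨s, Or.inl rfl⟩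
  obtain ⟨B', hB', hBt⟩ := (nonSep_pair hta).exists_block ⟨t, Or.inl rfl⟩
  refine ⟨B, B', hB, hB', hBs (Or.inr rfl), hBt (Or.inr rfl), ?_⟩
  rintro rfl
  have := (isBlock_iff.1 hB).2.1.conn_diff c s t ⟨hBs (Or.inl rfl), hs⟩ ⟨hBt (Or.inl rfl), ht⟩
  exact hxy (hsx.trans ((this.mono (Set.sdiff_subset_sdiff_left (Set.subset_univ _))).trans
    hty.symm))

/-- The leaves of the block-cutpoint tree are the leaf blocks. -/
lemma ncard_bc_leaves {V : Type*} [Finite V] {G : SimpleGraph V}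
    (hG : ∀ a b, Conn G Set.univ a b) :
    {x : BCVert G | ((bcGraph G).neighborSet x).ncard = 1}.ncard =
      {B : Set V | ∃ c, LeafBlock G B c}.ncard := by
  have hinr : ∀ B : {B : Set V // IsBlock G B},
      ((bcGraph G).neighborSet (Sum.inr B : BCVert G)).ncard = 1 ↔ ∃ c, LeafBlock G B c := by
    intro B
    have hadj : ∀ x : BCVert G, (bcGraph G).Adj (Sum.inr B : BCVert G) x ↔
        ∃ c : {v : V // IsCutVertex G v}, x = Sum.inl c ∧ (c : V) ∈ (B : Set V) := by
      intro x
      constructor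
      · rintro ⟨-, ⟨c, B', h, -, -⟩ | ⟨c, B', h, h', hc⟩⟩
        · cases h
        · cases h'
          exact ⟨c, h, hc⟩
      · rintro ⟨c, rfl, hc⟩
        exact (fromRel_adj _ _ _).2 ⟨by rintro ⟨⟩, Or.inr ⟨c, B, rfl, rfl, hc⟩⟩
    rw [Set.ncard_eq_one]
    constructor
    · rintro ⟨x, hx⟩
      have hxm : (bcGraph G).Adj (Sum.inr B : BCVert G) x := by
        change x ∈ (bcGraph G).neighborSet (Sum.inr B : BCVert G)
        rw [hx]; rfl
      obtain ⟨c, rfl, hc⟩ := (hadj x).1 hxm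
      refine ⟨c, B.2, c.2, hc, fun w hw hwc => ?_⟩
      have : (Sum.inl ⟨w, hwc⟩ : BCVert G) ∈ (bcGraph G).neighborSet (Sum.inr B : BCVert G) :=
        (hadj _).2 ⟨⟨w, hwc⟩, rfl, hw⟩
      rw [hx] at this
      exact congrArg Subtype.val (Sum.inl_injective (Set.mem_singleton_iff.1 this))
    · rintro ⟨c, h⟩
      refine ⟨Sum.inl ⟨c, h.cut⟩, Set.eq_singleton_iff_unique_mem.2
        ⟨(hadj _).2 ⟨⟨c, h.cut⟩, rfl, h.mem⟩, fun x hx => ?_⟩⟩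
      obtain ⟨c', rfl, hc'⟩ := (hadj x).1 hx
      rw [show c' = ⟨c, h.cut⟩ from Subtype.ext (h.uniq c' hc' c'.2)]
  have hinl : ∀ c : {v : V // IsCutVertex G v},
      ((bcGraph G).neighborSet (Sum.inl c : BCVert G)).ncard ≠ 1 := by
    intro c h
    obtain ⟨x, hx⟩ := Set.ncard_eq_one.1 h
    have hmem : ∀ (B : Set V) (hB : IsBlock G B), (c : V) ∈ B →
        (Sum.inr ⟨B, hB⟩ : BCVert G) = x := by
      intro B hB hcB
      have : (Sum.inr ⟨B, hB⟩ : BCVert G) ∈ (bcGraph G).neighborSet (Sum.inl c : BCVert G) := by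
        have hadj : (bcGraph G).Adj (Sum.inl c : BCVert G) (Sum.inr ⟨B, hB⟩ : BCVert G) :=
          (fromRel_adj _ _ _).2 ⟨Sum.inl_ne_inr, Or.inl ⟨c, ⟨B, hB⟩, rfl, rfl, hcB⟩⟩
        exact hadj
      rw [hx] at this
      exact this
    obtain ⟨B, B', hB, hB', hcB, hcB', hne⟩ := exists_two_blocks hG c.2
    have := (hmem B hB hcB).trans (hmem B' hB' hcB').symm
    exact hne (congrArg Subtype.val (Sum.inr_injective this))
  symm
  refine Set.ncard_congr
    (fun B hB => (Sum.inr ⟨B, hB.choose_spec.block⟩ : BCVert G)) ?_ ?_ ?_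
  · intro B hB
    exact (hinr _).2 hB
  · intro B B' _ _ h
    exact congrArg Subtype.val (Sum.inr_injective h)
  · rintro (c | B) hx
    · exact absurd hx (hinl c)
    · exact ⟨B, (hinr B).1 hx, rfl⟩

/-! ### Counting leaves of spanning trees -/

lemma GoodTree.exists_spanningTree {V : Type*} [Finite V] [Nonempty V] {G : SimpleGraph V}
    {S : Set V} {T : Set (Sym2 V)} (h : GoodTree G Set.univ S T) :
    ∃ T' : SimpleGraph V, T' ≤ G ∧ T'.IsTree ∧ {v | (T'.neighborSet v).ncard = 1} ⊆ S := by
  let T' : SimpleGraph V :=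
    { Adj := fun x y => s(x, y) ∈ T
      symm := ⟨fun _ _ h => Sym2.eq_swap ▸ h⟩
      loopless := ⟨fun x hx => G.loopless.irrefl x (h.sub x x hx).1⟩ }
  have hE : T'.edgeSet = T := by
    ext e
    induction e using Sym2.ind with
    | _ x y => rfl
  have hconn : T'.Connected :=
    { preconnected := fun x y =>
        (reachable_iff_reflTransGen _ _).2 (h.conn x trivial y trivial) }
  refine ⟨T', fun x y hxy => (h.sub x y hxy).1,
    isTree_iff_connected_and_card.2 ⟨hconn, ?_⟩, fun v hv => ?_⟩
  · have h1 := hconn.card_vert_le_card_edgeSet_add_one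
    have h2 := h.card
    rw [hE, Nat.card_coe_set_eq] at *
    rw [Set.ncard_univ] at h2
    omega
  · by_contra hvS
    obtain ⟨y, z, hyz, hy, hz⟩ := h.deg v trivial hvS
    obtain ⟨x, hx⟩ := Set.ncard_eq_one.1 (show (T'.neighborSet v).ncard = 1 from hv)
    have hy' : y ∈ T'.neighborSet v := hy
    have hz' : z ∈ T'.neighborSet v := hz
    rw [hx] at hy' hz'
    exact hyz (hy'.trans hz'.symm)

/-- Distinct leaf blocks give distinct leaves. -/
lemma ncard_leafBlock_le {V : Type*} [Finite V] {G : SimpleGraph V}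
    (hG : ∀ a b, Conn G Set.univ a b) {T : SimpleGraph V} (hTG : T ≤ G) (hT : T.IsTree) :
    {B : Set V | ∃ c, LeafBlock G B c}.ncard ≤ {v | (T.neighborSet v).ncard = 1}.ncard := by
  have hex : ∀ B ∈ {B : Set V | ∃ c, LeafBlock G B c},
      ∃ c e, LeafBlock G B c ∧ e ∈ B \ {c} ∧ (T.neighborSet e).ncard = 1 := by
    rintro B ⟨c, h⟩
    obtain ⟨e, he, hle⟩ := h.exists_leaf hG hTG hT
    exact ⟨c, e, h, he, hle⟩
  have : Nonempty V := hT.1.nonempty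
  choose! c e h he hle using hex
  refine Set.ncard_le_ncard_of_injOn e (fun B hB => hle B hB) fun B hB B' hB' heq => ?_
  refine (h B hB).eq_of_mem (h B' hB') (he B hB) ?_
  rw [heq]
  exact he B' hB'

/-- A spanning tree whose leaves are among simplicial vertices chosen one from each leaf block. -/
lemma exists_tree_le {V : Type*} [Finite V] {G : SimpleGraph V}
    (hG : ∀ a b, Conn G Set.univ a b) (hC : ChordProp G) (hK : ClawProp G)
    (hcut : ∃ v, IsCutVertex G v) :
    ∃ T : SimpleGraph V, T ≤ G ∧ T.IsTree ∧
      {v | (T.neighborSet v).ncard = 1}.ncard ≤ {B : Set V | ∃ c, LeafBlock G B c}.ncard := by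
  have hex : ∀ B ∈ {B : Set V | ∃ c, LeafBlock G B c},
      ∃ c s, LeafBlock G B c ∧ s ∈ B \ {c} ∧ Simp G Set.univ s := by
    rintro B ⟨c, h⟩
    obtain ⟨s, hs, hss⟩ := exists_simplicial_of_closed hC (A := Set.univ) (v := c)
      (Set.subset_univ (B \ {c})) (h.nonempty hG) (fun h => h.2 rfl) (fun x hx y _ hxy => by
        by_cases hyc : y = c
        · exact Or.inr hyc
        · exact Or.inl ⟨h.neighbor_mem hx.1 hx.2 hxy, hyc⟩)
    exact ⟨c, s, h, hs, hss⟩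
  obtain ⟨v0, hv0⟩ := hcut
  have : Nonempty V := ⟨v0⟩
  choose! c s h hs hss using hex
  set S := s '' {B : Set V | ∃ c, LeafBlock G B c} with hS
  have hcomp : ∀ v a, IsCutVertex G v → a ≠ v → ∃ b ∈ S, b ≠ v ∧ Conn G (Set.univ \ {v}) a b := by
    intro v a hv hav
    obtain ⟨B, c', hB, hBc⟩ := exists_leafBlock hG _ v a rfl hv hav
    have hmem : B ∈ {B : Set V | ∃ c, LeafBlock G B c} := ⟨c', hB⟩
    have hcc : c B = c' := hB.uniq _ (h B hmem).mem (h B hmem).cut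
    have hconn := hBc (s B) (hcc ▸ hs B hmem)
    exact ⟨s B, ⟨B, hmem, rfl⟩, (hconn.mem ⟨trivial, hav⟩).2, hconn⟩
  obtain ⟨x0, y0, hx0, hy0, hxy0⟩ := isCutVertex_iff.1 hv0
  obtain ⟨T, hT⟩ := exists_goodTree hC hK _ Set.univ S rfl Set.univ_nonempty
    (fun a _ b _ => hG a b)
    (by rintro _ ⟨B, hB, rfl⟩; exact hss B hB)
    (by obtain ⟨b, hb, -⟩ := hcomp v0 x0 hv0 hx0; exact ⟨b, hb⟩)
    (by
      intro v _ a _ hav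
      by_cases hv : IsCutVertex G v
      · exact hcomp v a hv hav
      · -- `G - v` is connected, and some component of `G - v0` misses `v`
        obtain ⟨z, hz, hzv⟩ : ∃ z, z ≠ v0 ∧ ¬ Conn G (Set.univ \ {v0}) z v := by
          by_cases hxv : Conn G (Set.univ \ {v0}) x0 v
          · exact ⟨y0, hy0, fun h' => hxy0 (hxv.trans h'.symm)⟩
          · exact ⟨x0, hx0, hxv⟩
        obtain ⟨b, hb, -, hzb⟩ := hcomp v0 z hv0 hz
        have hbv : b ≠ v := by rintro rfl; exact hzv hzb
        exact ⟨b, hb, hbv, conn_of_not_cut hv hav hbv⟩)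
  obtain ⟨T', hTG, hTT, hsub⟩ := hT.exists_spanningTree
  exact ⟨T', hTG, hTT, (Set.ncard_le_ncard hsub).trans (Set.ncard_image_le (Set.toFinite _))⟩

/-- for a finite connected claw-free chordal graph with a cut-vertex and ℓ ≥ 2,
the minimum number of leaves over all spanning trees equals ℓ iff the block-cutpoint tree
has exactly ℓ leaves. -/
theorem stmt_19 {V : Type*} [Fintype V] (G : SimpleGraph V)
    (hconn : G.Connected) (hclaw : ClawFree G) (hchord : Chordal G)
    (hcut : ∃ v : V, IsCutVertex G v) (l : ℕ) (hl : 2 ≤ l) :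
    IsLeast {n : ℕ | ∃ T' : SimpleGraph V, T' ≤ G ∧ T'.IsTree ∧
        {v : V | (T'.neighborSet v).ncard = 1}.ncard = n} l ↔
      {x : BCVert G | ((bcGraph G).neighborSet x).ncard = 1}.ncard = l := by
  have hG : ∀ a b, Conn G Set.univ a b := fun a b =>
    Relation.ReflTransGen.mono (fun _ _ h => ⟨h, trivial, trivial⟩) _ _
      ((reachable_iff_reflTransGen _ _).1 (hconn.preconnected a b))
  rw [ncard_bc_leaves hG]
  obtain ⟨T, hTG, hT, hle⟩ := exists_tree_le hG (chordProp_of_chordal hchord)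
    (clawProp_of_clawFree hclaw) hcut
  have hleast : IsLeast {n : ℕ | ∃ T' : SimpleGraph V, T' ≤ G ∧ T'.IsTree ∧
      {v : V | (T'.neighborSet v).ncard = 1}.ncard = n}
      {B : Set V | ∃ c, LeafBlock G B c}.ncard := by
    refine ⟨⟨T, hTG, hT, hle.antisymm (ncard_leafBlock_le hG hTG hT)⟩, ?_⟩
    rintro n ⟨T', hTG', hT', rfl⟩
    exact ncard_leafBlock_le hG hTG' hT'
  exact ⟨fun h => hleast.unique h, fun h => h ▸ hleast⟩
end
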